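/- Let n ≥ 3, 1 ≤ k ≤ n-2 and 0 ≤ σ ≤ σ_n. Set λ_k := (1/(k+1))·((n−1)/(n−1+k)) and η_k := (n−(k+1))/(2(2n−(k+1))), and let ω_k be the largest zero of T_n^{(k+1)}. Then for every x₀ ∈ [ω_k, 1], m_k^*(x₀,σ) ≤ A*_{n,k}(σ), where A*_{n,k}(σ) := T_{n-1}^{(k)}(1) if 0 ≤ σ/σ_n ≤ η_k, and A*_{n,k}(σ) := λ_k·T_n^{(k)}(1)·(σ/(η_k·σ_n))^{k/n} if η_k ≤ σ/σ_n ≤ 1. -/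

import Mathlib

open Polynomial Set

/-- `k`-th derivative of the Chebyshev polynomial `T_m`, evaluated at `x`. -/
noncomputable def chebDeriv (m : ℤ) (k : ℕ) (x : ℝ) : ℝ :=
  (derivative^[k] (Polynomial.Chebyshev.T ℝ m)).eval x

/-- `σ_n = 2^(n-1) n! = T_n^{(n)}(1)`. -/
noncomputable def sigmaN (n : ℕ) : ℝ := 2 ^ (n - 1) * (n.factorial : ℝ)

/-- `f` is `n` times differentiable on the set `s`. -/
def NTimesDiffOn (n : ℕ) (f : ℝ → ℝ) (s : Set ℝ) : Prop :=
  ∀ i < n, DifferentiableOn ℝ (iteratedDerivWithin i f s) s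

/-- The class `W^n_∞(σ)` on `[-1,1]`. -/
def memW (n : ℕ) (σ : ℝ) (f : ℝ → ℝ) : Prop :=
  NTimesDiffOn n f (Icc (-1:ℝ) 1) ∧
  (∀ x ∈ Icc (-1:ℝ) 1, |f x| ≤ 1) ∧
  (∀ x ∈ Icc (-1:ℝ) 1, |iteratedDerivWithin n f (Icc (-1:ℝ) 1) x| ≤ σ)

/-- `m_k(x,σ) = sup { |f^{(k)}(x)| : f ∈ W^n_∞(σ) }`. -/
noncomputable def mval (n k : ℕ) (x σ : ℝ) : ℝ :=
  sSup {y | ∃ f : ℝ → ℝ, memW n σ f ∧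
    y = |iteratedDerivWithin k f (Icc (-1:ℝ) 1) x|}

/-- `m_k^*(x,σ) = sup { |f^{(k)}(x)| : f ∈ W^n_∞(σ), f^{(k+1)}(x) = 0 }`. -/
noncomputable def mstar (n k : ℕ) (x σ : ℝ) : ℝ :=
  sSup {y | ∃ f : ℝ → ℝ, memW n σ f ∧
    iteratedDerivWithin (k+1) f (Icc (-1:ℝ) 1) x = 0 ∧
    y = |iteratedDerivWithin k f (Icc (-1:ℝ) 1) x|}

/-- `μ_k(x₀)`: best constant in the pointwise Markov inequality. -/
noncomputable def muk (n k : ℕ) (x : ℝ) : ℝ :=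
  sSup {y | ∃ p : Polynomial ℝ, p.natDegree ≤ n ∧
    (∀ t ∈ Icc (-1:ℝ) 1, |p.eval t| ≤ 1) ∧
    y = |(derivative^[k] p).eval x|}

/-- `μ_k^*(x₀)`: best constant in the pointwise Schur-type inequality. -/
noncomputable def mukStar (n k : ℕ) (x : ℝ) : ℝ :=
  sSup {y | ∃ p : Polynomial ℝ, p.natDegree ≤ n ∧
    (∀ t ∈ Icc (-1:ℝ) 1, |p.eval t| ≤ 1) ∧
    (derivative^[k+1] p).eval x = 0 ∧
    y = |(derivative^[k] p).eval x|}

/-! Suppose a polynomial `P` of degree `n` takes alternating values `±1` at `n` points of `[-1,1]`,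
has `|P⁽ⁿ⁾| ≥ σ` and satisfies `P⁽ᵏ⁺¹⁾(x₀) = 0`. If `|f⁽ᵏ⁾(x₀)| > |P⁽ᵏ⁾(x₀)|`, then for some `τ`
with `|τ| < 1` the `k`-th derivative of `P - τ f` has a double zero at `x₀`; by Rolle's theorem this
costs two sign changes more than `P - τ f` can afford, its `n`-th derivative having constant sign.
Hence `|f⁽ᵏ⁾(x₀)| ≤ |P⁽ᵏ⁾(x₀)|`.

At the critical level `σ = η_k σ_n` one of two such comparison polynomials gives the bound
`λ_k T_n⁽ᵏ⁾(1)`: either `T_{n-1} - κ (x² - 1) T_{n-1}'`, or the tilted polynomial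
`T_n + β (1 + x) T_n'` after a dilation about `-1`. A smaller `σ` is covered by monotonicity and
`λ_k T_n⁽ᵏ⁾(1) ≤ T_{n-1}⁽ᵏ⁾(1)`; a larger one reduces to the critical level by dilating `f` about
`x₀`. -/

/-- `F 0, F 1, …, F n` is a function on `s` followed by its successive derivatives, as in
`f, f', …, f⁽ⁿ⁾`; indexing by `ℕ` keeps one-sided derivatives at the ends of `s` out of the way. -/
def DerivTower (n : ℕ) (F : ℕ → ℝ → ℝ) (s : Set ℝ) : Prop :=
  ∀ i < n, ∀ x ∈ s, HasDerivWithinAt (F i) (F (i + 1) x) s x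

/-- `f` takes values of strictly alternating sign at `N` increasing points of `s`, the first of
these signs being that of `e`. -/
def Alternates (f : ℝ → ℝ) (s : Set ℝ) (N : ℕ) (e : ℝ) : Prop :=
  ∃ p : ℕ → ℝ, (∀ l < N, p l ∈ s) ∧ (∀ l, l + 1 < N → p l < p (l + 1)) ∧
    ∀ l < N, 0 < e * (-1) ^ l * f (p l)

section Alternation

variable {f f' f'' : ℝ → ℝ} {s : Set ℝ} {N : ℕ} {e x₀ : ℝ}

theorem exists_interlacing_deriv_pos (hs : s.OrdConnected)
    (hf : ∀ x ∈ s, HasDerivWithinAt f (f' x) s x) {p c : ℕ → ℝ} (hp : ∀ l ≤ N, p l ∈ s)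
    (hmono : ∀ l < N, p l < p (l + 1)) (hc : ∀ l < N, c l * f (p l) < c l * f (p (l + 1))) :
    ∃ q : ℕ → ℝ, (∀ l < N, q l ∈ Ioo (p l) (p (l + 1))) ∧ ∀ l < N, 0 < c l * f' (q l) := by
  have hstep : ∀ l, ∃ x, l < N → x ∈ Ioo (p l) (p (l + 1)) ∧ 0 < c l * f' x := by
    intro l
    by_cases hl : l < N
    · have hsub : Icc (p l) (p (l + 1)) ⊆ s := hs.out (hp l hl.le) (hp (l + 1) hl)
      obtain ⟨x, hx, hslope⟩ := exists_hasDerivAt_eq_slope f f' (hmono l hl)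
        (fun x hx => ((hf x (hsub hx)).mono hsub).continuousWithinAt)
        (fun x hx => ((hf x (hsub (Ioo_subset_Icc_self hx))).mono hsub).hasDerivAt
          (Icc_mem_nhds hx.1 hx.2))
      refine ⟨x, fun _ => ⟨hx, ?_⟩⟩
      rw [hslope, mul_div_assoc', mul_sub]
      exact div_pos (sub_pos.2 (hc l hl)) (sub_pos.2 (hmono l hl))
    · exact ⟨0, fun h => absurd h hl⟩
  choose q hq using hstep
  exact ⟨q, fun l hl => (hq l hl).1, fun l hl => (hq l hl).2⟩

theorem Alternates.deriv (hs : s.OrdConnected) (hf : ∀ x ∈ s, HasDerivWithinAt f (f' x) s x)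
    (h : Alternates f s (N + 1) e) : Alternates f' s N (-e) := by
  obtain ⟨p, hp, hmono, hsign⟩ := h
  obtain ⟨q, hq, hq'⟩ := exists_interlacing_deriv_pos hs hf (N := N) (p := p)
    (c := fun l => -e * (-1) ^ l) (fun l hl => hp l (by omega)) (fun l hl => hmono l (by omega))
    (fun l hl => by
      have := hsign (l + 1) (by omega)
      rw [pow_succ] at this
      linarith [hsign l (by omega)])
  exact ⟨q, fun l hl => hs.out (hp l (by omega)) (hp (l + 1) (by omega))
      (Ioo_subset_Icc_self (hq l hl)),
    fun l hl => (hq l (by omega)).2.trans (hq (l + 1) hl).1, hq'⟩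

theorem Alternates.deriv_Ioi (hs : s.OrdConnected) (hf : ∀ x ∈ s, HasDerivWithinAt f (f' x) s x)
    (hx₀ : x₀ ∈ s) (hf₀ : f x₀ = 0) (h : Alternates f (s ∩ Ioi x₀) N e) :
    Alternates f' (s ∩ Ioi x₀) N e := by
  obtain ⟨p, hp, hmono, hsign⟩ := h
  let r : ℕ → ℝ := fun l => Nat.casesOn l x₀ p
  obtain ⟨q, hq, hq'⟩ := exists_interlacing_deriv_pos hs hf (N := N) (p := r)
    (c := fun l => e * (-1) ^ l)
    (by rintro (_ | l) hl; exacts [hx₀, (hp l hl).1])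
    (by rintro (_ | l) hl; exacts [(hp 0 hl).2, hmono l hl])
    (by
      rintro (_ | l) hl
      · simpa [r, hf₀] using hsign 0 hl
      · have := hsign l (by omega)
        have := hsign (l + 1) hl
        simp only [r, pow_succ] at *
        linarith)
  have hle : ∀ l < N, x₀ ≤ r l := by
    rintro (_ | l) hl
    exacts [le_rfl, (hp l (by omega)).2.le]
  refine ⟨q, fun l hl => ⟨?_, (hle l hl).trans_lt (hq l hl).1⟩,
    fun l hl => (hq l (by omega)).2.trans (hq (l + 1) hl).1, hq'⟩
  exact hs.out hx₀ (hp l hl).1 ⟨(hle l hl).trans (hq l hl).1.le, (hq l hl).2.le⟩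

theorem Alternates.deriv_Iio (hs : s.OrdConnected) (hf : ∀ x ∈ s, HasDerivWithinAt f (f' x) s x)
    (hx₀ : x₀ ∈ s) (hf₀ : f x₀ = 0) (h : Alternates f (s ∩ Iio x₀) N e) :
    Alternates f' (s ∩ Iio x₀) N (-e) := by
  obtain ⟨p, hp, hmono, hsign⟩ := h
  let r : ℕ → ℝ := fun l => if l < N then p l else x₀
  have hr : ∀ l < N, r l = p l := fun l hl => if_pos hl
  have hrle : ∀ l, r l ≤ x₀ := fun l => by
    by_cases hl : l < N
    · exact (hr l hl).trans_le (hp l hl).2.le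
    · exact (if_neg hl).le
  obtain ⟨q, hq, hq'⟩ := exists_interlacing_deriv_pos hs hf (N := N) (p := r)
    (c := fun l => -e * (-1) ^ l)
    (fun l _ => by
      by_cases h : l < N <;> simp only [r, h, if_true, if_false]
      exacts [(hp l h).1, hx₀])
    (fun l hl => by
      by_cases h : l + 1 < N <;> simp only [r, hl, h, if_true, if_false]
      exacts [hmono l h, (hp l hl).2])
    (fun l hl => by
      have := hsign l hl
      by_cases h : l + 1 < N <;> simp only [r, hl, h, if_true, if_false]
      · have := hsign (l + 1) h
        rw [pow_succ] at this
        linarith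
      · linarith [hf₀ ▸ mul_zero (-e * (-1) ^ l)])
  refine ⟨q, fun l hl => ⟨?_, (hq l hl).2.trans_le (hrle _)⟩,
    fun l hl => (hq l (by omega)).2.trans (hq (l + 1) hl).1, hq'⟩
  exact hs.out (hp l hl).1 hx₀
    ⟨(hr l hl).symm.trans_le (hq l hl).1.le, (hq l hl).2.le.trans (hrle _)⟩

theorem Alternates.exists_split (h : Alternates f s N e) (hf₀ : f x₀ = 0) :
    ∃ a b, a + b = N ∧ Alternates f (s ∩ Iio x₀) a e ∧
      Alternates f (s ∩ Ioi x₀) b (e * (-1) ^ a) := by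
  obtain ⟨p, hp, hmono, hsign⟩ := h
  have hne : ∀ l < N, p l ≠ x₀ := fun l hl he => by
    simpa [he, hf₀] using hsign l hl
  have hle : ∀ l, ∀ m < N, l ≤ m → p l ≤ p m := fun l m hm hlm => by
    induction m, hlm using Nat.le_induction with
    | base => exact le_rfl
    | succ m _ ih => exact (ih (by omega)).trans (hmono m hm).le
  classical
  have hex : ∃ i, N ≤ i ∨ x₀ < p i := ⟨N, Or.inl le_rfl⟩
  set a := Nat.find hex
  have haN : a ≤ N := Nat.find_min' hex (Or.inl le_rfl)
  have hlt : ∀ l < a, p l < x₀ := fun l hl => by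
    have := Nat.find_min hex hl
    push Not at this
    exact this.2.lt_of_ne (hne l this.1)
  have hgt : ∀ l, a + l < N → x₀ < p (a + l) := fun l hl => by
    rcases Nat.find_spec hex with h | h
    · exact absurd h (by omega)
    · exact h.trans_le (hle _ _ hl (by omega))
  refine ⟨a, N - a, by omega, ⟨p, fun l hl => ⟨hp l (by omega), hlt l hl⟩,
      fun l hl => hmono l (by omega), fun l hl => hsign l (by omega)⟩,
    fun l => p (a + l), fun l hl => ⟨hp _ (by omega), hgt l (by omega)⟩,
    fun l hl => hmono (a + l) (by omega), fun l hl => ?_⟩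
  simpa only [pow_add, mul_assoc] using hsign (a + l) (by omega)

theorem Alternates.append {a b : ℕ} (hleft : Alternates f (s ∩ Iio x₀) a e)
    (hright : Alternates f (s ∩ Ioi x₀) b (e * (-1) ^ a)) : Alternates f s (a + b) e := by
  obtain ⟨p, hp, hpmono, hpsign⟩ := hleft
  obtain ⟨q, hq, hqmono, hqsign⟩ := hright
  have hcases : ∀ {l}, ¬ l < a → ∃ m, l = a + m := fun h => Nat.exists_eq_add_of_le (not_lt.1 h)
  refine ⟨fun l => if l < a then p l else q (l - a), fun l hl => ?_, fun l hl => ?_, fun l hl => ?_⟩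
  · dsimp only
    split_ifs with h
    exacts [(hp l h).1, (hq _ (by omega)).1]
  · dsimp only
    split_ifs with h h' h'
    · exact hpmono l h'
    · exact (hp l h).2.trans (hq _ (by omega)).2
    · omega
    · rw [Nat.sub_add_comm (not_lt.1 h)]
      exact hqmono _ (by omega)
  · dsimp only
    split_ifs with h
    · exact hpsign l h
    · obtain ⟨m, rfl⟩ := hcases h
      simpa only [pow_add, mul_assoc, Nat.add_sub_cancel_left] using hqsign m (by omega)

/- Rolle's theorem loses one sign change per differentiation, except that a zero of `f` off the
sign changes supplies an extra point; it flips the signs on its left, and a second flip restores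
the alternation. -/
theorem Alternates.deriv_deriv_of_double_zero (hs : s.OrdConnected)
    (hf : ∀ x ∈ s, HasDerivWithinAt f (f' x) s x) (hf' : ∀ x ∈ s, HasDerivWithinAt f' (f'' x) s x)
    (hx₀ : x₀ ∈ s) (hf₀ : f x₀ = 0) (hf₀' : f' x₀ = 0) (h : Alternates f s N e) :
    Alternates f'' s N e := by
  obtain ⟨a, b, rfl, hleft, hright⟩ := h.exists_split hf₀
  refine Alternates.append (x₀ := x₀) ?_
    ((hright.deriv_Ioi hs hf hx₀ hf₀).deriv_Ioi hs hf' hx₀ hf₀')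
  simpa only [neg_neg] using (hleft.deriv_Iio hs hf hx₀ hf₀).deriv_Iio hs hf' hx₀ hf₀'

theorem DerivTower.alternates_add {n : ℕ} {G : ℕ → ℝ → ℝ} (hs : s.OrdConnected)
    (hG : DerivTower n G s) {i : ℕ} (j : ℕ) (hij : i + j ≤ n) (h : Alternates (G i) s (N + j) e) :
    ∃ e', Alternates (G (i + j)) s N e' := by
  induction j generalizing i e with
  | zero => exact ⟨e, h⟩
  | succ j ih =>
    obtain ⟨e', he'⟩ := ih (i := i + 1) (by omega) (h.deriv (N := N + j) hs (hG i (by omega)))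
    exact ⟨e', by rwa [Nat.add_right_comm] at he'⟩

end Alternation

theorem not_alternates_two_of_same_sign {f : ℝ → ℝ} {s : Set ℝ} {c : ℝ}
    (hf : ∀ x ∈ s, 0 < c * f x) (e : ℝ) : ¬ Alternates f s 2 e := by
  rintro ⟨p, hp, -, hsign⟩
  have h₀ := hsign 0 two_pos
  have h₁ := hsign 1 one_lt_two
  have hprod := mul_pos (hf _ (hp 0 two_pos)) (hf _ (hp 1 one_lt_two))
  have : 0 < (e * f (p 0) * c) * -(e * f (p 1) * c) := by
    have := mul_pos h₀ h₁
    have hc : c ≠ 0 := fun hc => by simp [hc] at hprod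
    nlinarith [mul_pos this (sq_pos_of_ne_zero hc)]
  nlinarith [sq_nonneg e]

theorem DerivTower.not_double_zero_of_alternates {n k : ℕ} {G : ℕ → ℝ → ℝ} {s : Set ℝ}
    {c e x₀ : ℝ} (hs : s.OrdConnected) (hk : k + 2 ≤ n) (hG : DerivTower n G s)
    (hG₀ : Alternates (G 0) s n e) (hGn : ∀ x ∈ s, 0 < c * G n x) (hx₀ : x₀ ∈ s)
    (hGk : G k x₀ = 0) : G (k + 1) x₀ ≠ 0 := by
  intro hGk'
  obtain ⟨N, rfl⟩ : ∃ N, n = N + 2 + k := ⟨n - k - 2, by omega⟩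
  obtain ⟨e₁, hGk_alt⟩ := hG.alternates_add hs k (by omega) hG₀
  rw [zero_add] at hGk_alt
  have hGk2_alt := hGk_alt.deriv_deriv_of_double_zero hs (hG k (by omega)) (hG (k + 1) (by omega))
    hx₀ hGk hGk'
  rw [add_comm N 2] at hGk2_alt
  obtain ⟨e₂, hGn_alt⟩ := hG.alternates_add hs (i := k + 1 + 1) N (by omega) hGk2_alt
  rw [show k + 1 + 1 + N = N + 2 + k by omega] at hGn_alt
  exact not_alternates_two_of_same_sign hGn e₂ hGn_alt

theorem DerivTower.abs_le_of_comparison {n k : ℕ} {F P : ℕ → ℝ → ℝ} {s : Set ℝ} {S c e x₀ : ℝ}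
    {t : ℕ → ℝ} (hs : s.OrdConnected) (hk : k + 2 ≤ n) (hF : DerivTower n F s)
    (hP : DerivTower n P s) (hF₀ : ∀ x ∈ s, |F 0 x| ≤ 1) (hFn : ∀ x ∈ s, |F n x| ≤ S)
    (hPn : ∀ x ∈ s, P n x = c) (hc : 0 < |c|) (hSc : S ≤ |c|)
    (hx₀ : x₀ ∈ s) (hF' : F (k + 1) x₀ = 0) (hP' : P (k + 1) x₀ = 0)
    (ht : ∀ l < n, t l ∈ s) (htmono : ∀ l, l + 1 < n → t l < t (l + 1))
    (he : |e| = 1) (htP : ∀ l < n, 1 ≤ e * (-1) ^ l * P 0 (t l)) :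
    |F k x₀| ≤ |P k x₀| := by
  by_contra! hlt
  have hFpos : 0 < |F k x₀| := (abs_nonneg _).trans_lt hlt
  set τ := P k x₀ / F k x₀ with hτ_def
  have hτ : |τ| < 1 := by rwa [hτ_def, abs_div, div_lt_one hFpos]
  let G : ℕ → ℝ → ℝ := fun i x => P i x - τ * F i x
  have hG : DerivTower n G s := fun i hi x hx => (hP i hi x hx).sub ((hF i hi x hx).const_mul τ)
  have hGk : G k x₀ = 0 := sub_eq_zero.2 (div_mul_cancel₀ _ (abs_pos.1 hFpos)).symm
  have hGk' : G (k + 1) x₀ = 0 := by simp [G, hF', hP']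
  have hG₀ : Alternates (G 0) s n e := by
    refine ⟨t, ht, htmono, fun l hl => ?_⟩
    have hsmall : |e * (-1) ^ l * (τ * F 0 (t l))| < 1 := by
      simp only [abs_mul, he, abs_pow, abs_neg, abs_one, one_pow, one_mul]
      exact (mul_le_of_le_one_right (abs_nonneg τ) (hF₀ _ (ht l hl))).trans_lt hτ
    simp only [G]
    linarith [htP l hl, (abs_lt.1 hsmall).2]
  have hGn : ∀ x ∈ s, 0 < c * G n x := fun x hx => by
    have hsmall : |τ * F n x| < |c| := by
      rw [abs_mul]
      nlinarith [mul_le_mul_of_nonneg_left ((hFn x hx).trans hSc) (abs_nonneg τ)]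
    have := mul_lt_mul_of_pos_left hsmall hc
    rw [← abs_mul, abs_mul_abs_self] at this
    simp only [G, hPn x hx]
    linarith [le_abs_self (c * (τ * F n x))]
  exact hG.not_double_zero_of_alternates hs hk hG₀ hGn hx₀ hGk hGk'

section RealRooted

variable {p : ℝ[X]} {x : ℝ}

theorem splits_derivative (hp : p.Splits) : (derivative p).Splits := by
  rw [splits_iff_card_roots]
  have := hp.natDegree_eq_card_roots
  have := card_roots_le_derivative p
  have := natDegree_derivative_le p
  have := card_roots' (derivative p)
  omega

theorem splits_iterate_derivative (hp : p.Splits) (k : ℕ) : (derivative^[k] p).Splits := by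
  induction k with
  | zero => exact hp
  | succ k ih =>
    rw [Function.iterate_succ_apply']
    exact splits_derivative ih

theorem leadingCoeff_iterate_derivative_nonneg (hp : 0 ≤ p.leadingCoeff) (k : ℕ) :
    0 ≤ (derivative^[k] p).leadingCoeff := by
  induction k with
  | zero => exact hp
  | succ k ih =>
    rw [Function.iterate_succ_apply', leadingCoeff_derivative]
    positivity

theorem eval_iterate_derivative_prod_X_sub_C_nonneg (s : Multiset ℝ) (hs : ∀ r ∈ s, r ≤ x) (j : ℕ) :
    0 ≤ (derivative^[j] ((s.map (X - C ·)).prod)).eval x := by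
  induction s using Multiset.induction_on generalizing j with
  | empty => rcases j with _ | j <;> simp [Function.iterate_succ_apply]
  | cons a s ih =>
    have hlinear : ∀ i, 0 ≤ (derivative^[i] (X - C a)).eval x := by
      rintro (_ | _ | i)
      · simpa using hs a (Multiset.mem_cons_self a s)
      · simp
      · simp [Function.iterate_succ_apply]
    rw [Multiset.map_cons, Multiset.prod_cons, iterate_derivative_mul, eval_finsetSum]
    refine Finset.sum_nonneg fun i _ => ?_
    rw [eval_smul, eval_mul]
    exact smul_nonneg (Nat.zero_le _)
      (mul_nonneg (hlinear _) (ih (fun r hr => hs r (Multiset.mem_cons_of_mem hr)) _))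

theorem eval_iterate_derivative_nonneg (hp : p.Splits) (hlead : 0 ≤ p.leadingCoeff)
    (hx : ∀ r ∈ p.roots, r ≤ x) (j : ℕ) : 0 ≤ (derivative^[j] p).eval x := by
  rw [hp.eq_prod_roots, ← smul_eq_C_mul, iterate_derivative_smul, eval_smul]
  exact smul_nonneg hlead (eval_iterate_derivative_prod_X_sub_C_nonneg _ hx j)

/- Adjoining the root `a` to `q` multiplies the expression by `(x - a)²` and adds
`q² (A - B (x - a))`. -/
theorem laguerre_prod_X_sub_C {A B : ℝ} (s : Multiset ℝ) (hs : ∀ r ∈ s, B * (x - r) ≤ A) {q : ℝ[X]}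
    (hq : q = (s.map (X - C ·)).prod) :
    0 ≤ A * ((derivative q).eval x ^ 2 - q.eval x * (derivative (derivative q)).eval x)
      - B * (q.eval x * (derivative q).eval x) := by
  induction s using Multiset.induction_on generalizing q with
  | empty => simp [hq]
  | cons a s ih =>
    have hrec := ih (fun r hr => hs r (Multiset.mem_cons_of_mem hr)) rfl
    have ha := hs a (Multiset.mem_cons_self a s)
    rw [Multiset.map_cons, Multiset.prod_cons] at hq
    set q' := (s.map (X - C ·)).prod
    simp only [hq, derivative_mul, derivative_sub, derivative_X, derivative_C, derivative_add,
      sub_zero, one_mul, eval_add, eval_mul, eval_sub, eval_X, eval_C]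
    linarith [mul_nonneg (sq_nonneg (x - a)) hrec,
      mul_nonneg (sub_nonneg.2 ha) (sq_nonneg (q'.eval x))]

theorem laguerre_inequality_of_roots {A B : ℝ} (hp : p.Splits)
    (hroots : ∀ r ∈ p.roots, B * (x - r) ≤ A) :
    0 ≤ A * ((derivative p).eval x ^ 2 - p.eval x * (derivative (derivative p)).eval x)
      - B * (p.eval x * (derivative p).eval x) := by
  have hprod := laguerre_prod_X_sub_C p.roots hroots rfl
  set q := (p.roots.map (X - C ·)).prod with hq
  have hp_eq := hp.eq_prod_roots
  rw [← hq] at hp_eq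
  rw [hp_eq]
  simp only [derivative_mul, derivative_C, zero_mul, zero_add, eval_mul, eval_C]
  linarith [mul_nonneg (sq_nonneg p.leadingCoeff) hprod]

end RealRooted

section Calculus

variable {f f' : ℝ → ℝ} {a b : ℝ}

theorem monotoneOn_Icc_of_hasDerivAt_nonneg (hf : ∀ x ∈ Icc a b, HasDerivAt f (f' x) x)
    (h : ∀ x ∈ Icc a b, 0 ≤ f' x) : MonotoneOn f (Icc a b) :=
  monotoneOn_of_hasDerivWithinAt_nonneg (convex_Icc a b)
    (fun x hx => (hf x hx).continuousAt.continuousWithinAt)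
    (fun x hx => (hf x (interior_subset hx)).hasDerivWithinAt)
    fun x hx => h x (interior_subset hx)

theorem le_max_of_hasDerivAt_mul {G H : ℝ → ℝ} {x : ℝ} (hx : x ∈ Icc a b)
    (hf : ∀ y ∈ Icc a b, HasDerivAt f (G y * H y) y) (hG : MonotoneOn G (Icc a b))
    (hH : ∀ y ∈ Icc a b, 0 ≤ H y) : f x ≤ max (f a) (f b) := by
  rcases le_total 0 (G x) with hGx | hGx
  · have hright : Icc x b ⊆ Icc a b := Icc_subset_Icc_left hx.1
    refine le_max_of_le_right (monotoneOn_Icc_of_hasDerivAt_nonneg (fun y hy => hf y (hright hy))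
      (fun y hy => ?_) (left_mem_Icc.2 hx.2) (right_mem_Icc.2 hx.2) hx.2)
    exact mul_nonneg (hGx.trans (hG hx (hright hy) hy.1)) (hH y (hright hy))
  · have hleft : Icc a x ⊆ Icc a b := Icc_subset_Icc_right hx.2
    refine le_max_of_le_left (neg_le_neg_iff.1 (monotoneOn_Icc_of_hasDerivAt_nonneg
      (fun y hy => (hf y (hleft hy)).neg) (fun y hy => ?_)
      (left_mem_Icc.2 hx.1) (right_mem_Icc.2 hx.1) hx.1))
    exact neg_nonneg.2 (mul_nonpos_of_nonpos_of_nonneg ((hG (hleft hy) hx hy.2).trans hGx)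
      (hH y (hleft hy)))

end Calculus

section ChebyshevDerivatives

theorem hasDerivAt_chebDeriv (m : ℤ) (k : ℕ) (x : ℝ) :
    HasDerivAt (chebDeriv m k) (chebDeriv m (k + 1) x) x := by
  rw [chebDeriv, Function.iterate_succ_apply']
  exact (derivative^[k] (Polynomial.Chebyshev.T ℝ m)).hasDerivAt x

theorem continuous_chebDeriv (m : ℤ) (k : ℕ) : Continuous (chebDeriv m k) :=
  continuous_iff_continuousAt.2 fun x => (hasDerivAt_chebDeriv m k x).continuousAt

theorem chebDeriv_le_chebDeriv {m : ℤ} {k : ℕ} {a b : ℝ} (hab : a ≤ b)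
    (h : ∀ x ∈ Icc a b, 0 ≤ chebDeriv m (k + 1) x) : chebDeriv m k a ≤ chebDeriv m k b :=
  monotoneOn_Icc_of_hasDerivAt_nonneg (fun x _ => hasDerivAt_chebDeriv m k x) h
    (left_mem_Icc.2 hab) (right_mem_Icc.2 hab) hab

theorem chebDeriv_ode (n k : ℕ) (x : ℝ) : (1 - x ^ 2) * chebDeriv n (k + 2) x =
    (2 * k + 1) * x * chebDeriv n (k + 1) x - ((n : ℝ) ^ 2 - (k : ℝ) ^ 2) * chebDeriv n k x := by
  simpa [chebDeriv] using
    Polynomial.Chebyshev.one_sub_X_sq_mul_iterate_derivative_T_eval (R := ℝ) n k x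

theorem chebDeriv_one_rec (n k : ℕ) :
    (2 * k + 1) * chebDeriv n (k + 1) 1 = ((n : ℝ) ^ 2 - (k : ℝ) ^ 2) * chebDeriv n k 1 := by
  linarith [chebDeriv_ode n k 1]

theorem splits_chebyshev_T (n : ℕ) : (Polynomial.Chebyshev.T ℝ n).Splits := by
  rw [splits_iff_card_roots, Polynomial.Chebyshev.roots_T_real, Finset.card_val,
    Finset.card_image_of_injOn
      ((Finset.range n).nodup_map_iff_injOn.mp (Polynomial.Chebyshev.roots_T_real_nodup n)),
    Polynomial.Chebyshev.natDegree_T]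
  simp

theorem leadingCoeff_chebyshev_T_nonneg (n : ℕ) :
    0 ≤ (Polynomial.Chebyshev.T ℝ n).leadingCoeff := by
  rw [Polynomial.Chebyshev.leadingCoeff_T]
  positivity

theorem chebDeriv_self (n : ℕ) (x : ℝ) : chebDeriv n n x = sigmaN n := by
  have hdeg : (Polynomial.Chebyshev.T ℝ n).natDegree = n := by simp
  have hcoeff : (Polynomial.Chebyshev.T ℝ n).coeff n = 2 ^ (n - 1) := by
    simpa [leadingCoeff, hdeg] using Polynomial.Chebyshev.leadingCoeff_T ℝ n
  have hconst : (derivative^[n] (Polynomial.Chebyshev.T ℝ n)).natDegree = 0 := by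
    simpa [hdeg] using natDegree_iterate_derivative (Polynomial.Chebyshev.T ℝ n) n
  rw [chebDeriv, eq_C_of_natDegree_eq_zero hconst, eval_C, coeff_iterate_derivative, zero_add,
    Nat.descFactorial_self, nsmul_eq_mul, hcoeff, sigmaN, mul_comm]

theorem sigmaN_pos (n : ℕ) : 0 < sigmaN n := by
  unfold sigmaN
  positivity

theorem chebDeriv_eq_zero_of_lt {n j : ℕ} (h : n < j) (x : ℝ) : chebDeriv n j x = 0 := by
  rw [chebDeriv, iterate_derivative_eq_zero (by simpa using h), eval_zero]

theorem chebDeriv_zero_one (m : ℤ) : chebDeriv m 0 1 = 1 := by simp [chebDeriv]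

theorem chebDeriv_one_pos {n k : ℕ} (h : k ≤ n) : 0 < chebDeriv n k 1 := by
  induction k with
  | zero => exact (chebDeriv_zero_one n).symm ▸ one_pos
  | succ k ih =>
    have hk : (k : ℝ) + 1 ≤ n := by exact_mod_cast h
    have hcoef : (0 : ℝ) < n ^ 2 - k ^ 2 := by nlinarith [Nat.cast_nonneg (α := ℝ) k]
    have hmul := mul_pos hcoef (ih (by omega))
    rw [← chebDeriv_one_rec] at hmul
    exact pos_of_mul_pos_right hmul (by positivity)

theorem chebDeriv_nonneg_of_one_le (n k : ℕ) {x : ℝ} (hx : 1 ≤ x) : 0 ≤ chebDeriv n k x := by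
  refine eval_iterate_derivative_nonneg (splits_chebyshev_T n) (leadingCoeff_chebyshev_T_nonneg n)
    (fun r hr => ?_) k
  rw [Polynomial.Chebyshev.roots_T_real, Finset.mem_val] at hr
  obtain ⟨j, -, rfl⟩ := Finset.mem_image.mp hr
  exact (Real.cos_le_one _).trans hx

theorem chebDeriv_pos_of_one_le {n k : ℕ} (h : k ≤ n) {x : ℝ} (hx : 1 ≤ x) :
    0 < chebDeriv n k x :=
  (chebDeriv_one_pos h).trans_le
    (chebDeriv_le_chebDeriv hx fun _ hy => chebDeriv_nonneg_of_one_le n (k + 1) hy.1)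

theorem chebDeriv_neg (n k : ℕ) (x : ℝ) :
    chebDeriv n k (-x) = (-1) ^ (n + k) * chebDeriv n k x := by
  induction k generalizing x with
  | zero => simp [chebDeriv, Polynomial.Chebyshev.T_eval_neg]
  | succ k ih =>
    have hneg : HasDerivAt (fun y => chebDeriv n k (-y)) (-chebDeriv n (k + 1) (-x)) x := by
      simpa using! (hasDerivAt_chebDeriv n k (-x)).comp x (hasDerivAt_neg x)
    rw [funext ih] at hneg
    have := hneg.unique ((hasDerivAt_chebDeriv n k x).const_mul _)
    rw [← add_assoc, pow_succ]
    linarith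

theorem mem_Ioo_of_chebDeriv_eq_zero {n k : ℕ} (h : k ≤ n) {r : ℝ} (hr : chebDeriv n k r = 0) :
    r ∈ Ioo (-1) 1 := by
  constructor <;> by_contra! hc
  · have := chebDeriv_pos_of_one_le h (x := -r) (by linarith)
    simp [chebDeriv_neg, hr] at this
  · exact (chebDeriv_pos_of_one_le h hc).ne' hr

theorem chebDeriv_laguerre (n k : ℕ) (x : ℝ) :
    0 ≤ chebDeriv n (k + 1) x ^ 2 - chebDeriv n k x * chebDeriv n (k + 2) x := by
  have := laguerre_inequality_of_roots (A := 1) (B := 0) (x := x)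
    (splits_iterate_derivative (splits_chebyshev_T n) k) (by simp)
  simpa only [chebDeriv, Function.iterate_succ_apply', one_mul, zero_mul, sub_zero] using this

theorem chebDeriv_laguerre_one_add {n k : ℕ} (h : k ≤ n) (x : ℝ) :
    0 ≤ (1 + x) * (chebDeriv n (k + 1) x ^ 2 - chebDeriv n k x * chebDeriv n (k + 2) x)
      - chebDeriv n k x * chebDeriv n (k + 1) x := by
  have := laguerre_inequality_of_roots (A := 1 + x) (B := 1) (x := x)
    (splits_iterate_derivative (splits_chebyshev_T n) k) fun r hr => by
      linarith [(mem_Ioo_of_chebDeriv_eq_zero h (r := r) (isRoot_of_mem_roots hr)).1]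
  simpa only [chebDeriv, Function.iterate_succ_apply', one_mul] using this

theorem chebDeriv_tangent_le {m : ℤ} {k : ℕ} {a b : ℝ} (hab : a ≤ b)
    (h : ∀ x ∈ Icc a b, 0 ≤ chebDeriv m (k + 2) x) :
    chebDeriv m k a + (b - a) * chebDeriv m (k + 1) a ≤ chebDeriv m k b := by
  have hmono := monotoneOn_Icc_of_hasDerivAt_nonneg
    (f := fun x => chebDeriv m k x - (x - a) * chebDeriv m (k + 1) a)
    (fun x _ => (hasDerivAt_chebDeriv m k x).sub
      (((hasDerivAt_id x).sub_const a).mul_const (chebDeriv m (k + 1) a)))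
    (fun x hx => by
      have := chebDeriv_le_chebDeriv hx.1 fun y hy => h y ⟨hy.1, hy.2.trans hx.2⟩
      linarith)
    (left_mem_Icc.2 hab) (right_mem_Icc.2 hab) hab
  simp only [sub_self, zero_mul, sub_zero] at hmono
  linarith

theorem chebDeriv_taylor_two_le {m : ℤ} {k : ℕ} {a b : ℝ} (hab : a ≤ b)
    (h : ∀ x ∈ Icc a b, 0 ≤ chebDeriv m (k + 3) x) :
    chebDeriv m k a + (b - a) * chebDeriv m (k + 1) a + (b - a) ^ 2 / 2 * chebDeriv m (k + 2) a ≤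
      chebDeriv m k b := by
  have hmono := monotoneOn_Icc_of_hasDerivAt_nonneg
    (f := fun x => chebDeriv m k x - (x - a) * chebDeriv m (k + 1) a -
      (x - a) ^ 2 / 2 * chebDeriv m (k + 2) a)
    (fun x _ => ((hasDerivAt_chebDeriv m k x).sub
      (((hasDerivAt_id x).sub_const a).mul_const (chebDeriv m (k + 1) a))).sub
      (((((hasDerivAt_id x).sub_const a).pow 2).div_const 2).mul_const (chebDeriv m (k + 2) a)))
    (fun x hx => by
      have := chebDeriv_tangent_le (k := k + 1) hx.1 fun y hy => h y ⟨hy.1, hy.2.trans hx.2⟩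
      simp only [id]
      norm_num
      linarith)
    (left_mem_Icc.2 hab) (right_mem_Icc.2 hab) hab
  simp only [sub_self, zero_mul, sub_zero, ne_eq, OfNat.ofNat_ne_zero, not_false_eq_true, zero_pow,
    zero_div] at hmono
  linarith

end ChebyshevDerivatives

section LargestZero

variable {n k : ℕ} {w x : ℝ}

theorem largest_zero_mem_Ico (hk : k ≤ n) (hw : IsGreatest {x | chebDeriv n k x = 0} w) :
    w ∈ Ico 0 1 := by
  refine ⟨?_, (mem_Ioo_of_chebDeriv_eq_zero hk hw.1).2⟩
  have : chebDeriv n k (-w) = 0 := by rw [chebDeriv_neg, hw.1, mul_zero]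
  linarith [hw.2 this]

theorem chebDeriv_nonneg_of_largest_zero_le (hw : IsGreatest {x | chebDeriv n k x = 0} w)
    (hx : w ≤ x) {j : ℕ} (hj : k ≤ j) : 0 ≤ chebDeriv n j x := by
  obtain ⟨i, rfl⟩ := Nat.exists_eq_add_of_le' hj
  rw [chebDeriv, Function.iterate_add_apply]
  exact eval_iterate_derivative_nonneg (splits_iterate_derivative (splits_chebyshev_T n) k)
    (leadingCoeff_iterate_derivative_nonneg (leadingCoeff_chebyshev_T_nonneg n) k)
    (fun r hr => (hw.2 (isRoot_of_mem_roots hr : chebDeriv n k r = 0)).trans hx) i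

theorem chebDeriv_pos_of_largest_zero_lt (hw : IsGreatest {x | chebDeriv n k x = 0} w)
    (hx : w < x) : 0 < chebDeriv n k x :=
  (chebDeriv_nonneg_of_largest_zero_le hw hx.le le_rfl).lt_of_ne'
    fun h => (hw.2 h).not_gt hx

/- A common zero of two consecutive derivatives inside `(-1,1)` would, by the differential
equation, be a zero of all later ones, including the constant `T_n⁽ⁿ⁾`. -/
theorem chebDeriv_succ_pos_of_largest_zero_le (hk : k < n)
    (hw : IsGreatest {x | chebDeriv n k x = 0} w) (hx : w ≤ x) : 0 < chebDeriv n (k + 1) x := by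
  suffices hne : chebDeriv n (k + 1) w ≠ 0 from
    ((chebDeriv_nonneg_of_largest_zero_le hw le_rfl (by omega)).lt_of_ne' hne).trans_le
      (chebDeriv_le_chebDeriv hx fun y hy =>
        chebDeriv_nonneg_of_largest_zero_le hw hy.1 (by omega))
  intro hzero
  have hwI := largest_zero_mem_Ico hk.le hw
  have hw2 : 1 - w ^ 2 ≠ 0 := by nlinarith [hwI.1, hwI.2]
  have hall : ∀ j, chebDeriv n (k + j) w = 0 ∧ chebDeriv n (k + j + 1) w = 0 := by
    intro j
    induction j with
    | zero => exact ⟨hw.1, hzero⟩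
    | succ j ih =>
      have := chebDeriv_ode n (k + j) w
      rw [ih.1, ih.2, mul_zero, mul_zero, sub_zero] at this
      exact ⟨ih.2, (mul_eq_zero.1 this).resolve_left hw2⟩
  have := (hall (n - k)).1
  rw [Nat.add_sub_cancel' hk.le, chebDeriv_self] at this
  exact (sigmaN_pos n).ne' this

end LargestZero

section ExtremalProblem

/-- The data of the extremal problem at `x₀`: a function on `[-1,1]` with its first `n` derivatives,
bounded by `1` and with `n`-th derivative bounded by `S`, whose `(k+1)`-st derivative vanishes
at `x₀`. -/
structure Competitor (n k : ℕ) (S x₀ : ℝ) (F : ℕ → ℝ → ℝ) : Prop where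
  tower : DerivTower n F (Icc (-1) 1)
  abs_le_one : ∀ x ∈ Icc (-1 : ℝ) 1, |F 0 x| ≤ 1
  abs_deriv_le : ∀ x ∈ Icc (-1 : ℝ) 1, |F n x| ≤ S
  deriv_eq_zero : F (k + 1) x₀ = 0

theorem Competitor.mono {n k : ℕ} {S S' x₀ : ℝ} {F : ℕ → ℝ → ℝ} (hF : Competitor n k S x₀ F)
    (hS : S ≤ S') : Competitor n k S' x₀ F :=
  { hF with abs_deriv_le := fun x hx => (hF.abs_deriv_le x hx).trans hS }

theorem DerivTower.comp_affine {n : ℕ} {F : ℕ → ℝ → ℝ} {s t : Set ℝ} {a b : ℝ}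
    (hF : DerivTower n F t) (hst : MapsTo (fun x => a * x + b) s t) :
    DerivTower n (fun i x => a ^ i * F i (a * x + b)) s := by
  intro i hi x hx
  have haff : HasDerivWithinAt (fun x => a * x + b) a s x := by
    simpa using (((hasDerivAt_id x).const_mul a).add_const b).hasDerivWithinAt
  convert! ((hF i hi _ (hst hx)).comp x haff hst).const_mul (a ^ i) using 1
  ring

theorem Competitor.dilate {n k : ℕ} {S x₀ ρ : ℝ} {F : ℕ → ℝ → ℝ} (hF : Competitor n k S x₀ F)
    (hx₀ : x₀ ∈ Icc (-1) 1) (hρ : ρ ∈ Icc 0 1) :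
    Competitor n k (ρ ^ n * S) x₀ (fun i x => ρ ^ i * F i (ρ * x + (1 - ρ) * x₀)) := by
  have hmaps : MapsTo (fun x => ρ * x + (1 - ρ) * x₀) (Icc (-1) 1) (Icc (-1) 1) := fun x hx =>
    convex_Icc (-1 : ℝ) 1 hx hx₀ hρ.1 (sub_nonneg.2 hρ.2) (by ring)
  refine ⟨hF.tower.comp_affine hmaps, fun x hx => ?_, fun x hx => ?_, ?_⟩
  · simpa using hF.abs_le_one _ (hmaps hx)
  · rw [abs_mul, abs_of_nonneg (pow_nonneg hρ.1 n)]
    exact mul_le_mul_of_nonneg_left (hF.abs_deriv_le _ (hmaps hx)) (pow_nonneg hρ.1 n)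
  · rw [show ρ * x₀ + (1 - ρ) * x₀ = x₀ by ring, hF.deriv_eq_zero, mul_zero]

end ExtremalProblem

section ChebyshevNodes

theorem chebDeriv_zero_node {m l : ℕ} (hl : l ≤ m) :
    chebDeriv m 0 (Polynomial.Chebyshev.node m l) = (-1) ^ l :=
  Polynomial.Chebyshev.eval_T_real_node (Finset.mem_Iic.2 hl)

theorem sq_sub_one_mul_chebDeriv_one_node {m : ℕ} (hm : m ≠ 0) (l : ℕ) :
    (Polynomial.Chebyshev.node m l ^ 2 - 1) *
      chebDeriv m 1 (Polynomial.Chebyshev.node m l) = 0 := by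
  set θ := l * Real.pi / m with hθ
  have hderiv : chebDeriv m 1 (Real.cos θ) * Real.sin θ = 0 := by
    have hsin := Polynomial.Chebyshev.U_real_cos θ (m - 1)
    push_cast at hsin
    rw [sub_add_cancel, hθ, mul_div_cancel₀ _ (Nat.cast_ne_zero.2 hm), Real.sin_nat_mul_pi] at hsin
    simp only [chebDeriv, Function.iterate_one, Polynomial.Chebyshev.T_derivative_eq_U, eval_mul,
      mul_assoc, hθ, hsin, mul_zero]
  rw [Polynomial.Chebyshev.node]
  linear_combination -Real.sin θ * hderiv +
    chebDeriv m 1 (Real.cos θ) * Real.sin_sq_add_cos_sq θ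

theorem neg_one_pow_sub {R : Type*} [Ring R] {l m : ℕ} (hl : l ≤ m) :
    (-1 : R) ^ m * (-1) ^ l * (-1) ^ (m - l) = 1 := by
  rw [mul_assoc, ← pow_add, Nat.add_sub_cancel' hl, ← pow_add, Even.neg_one_pow ⟨m, rfl⟩]

end ChebyshevNodes

section NodalComparison

/-- The `i`-th derivative of `(x² - 1) T_m'(x)`, the polynomial vanishing at the extremal points of
`T_m`. The differential equation of `T_m` turns the first derivative into `x T_m' + m² T_m`, and
the further ones are written accordingly. -/
noncomputable def nodalDeriv (m : ℕ) : ℕ → ℝ → ℝ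
  | 0, x => (x ^ 2 - 1) * chebDeriv m 1 x
  | i + 1, x => x * chebDeriv m (i + 1) x + ((m : ℝ) ^ 2 + i) * chebDeriv m i x

theorem hasDerivAt_nodalDeriv (m i : ℕ) (x : ℝ) :
    HasDerivAt (nodalDeriv m i) (nodalDeriv m (i + 1) x) x := by
  cases i with
  | zero =>
    convert! ((hasDerivAt_pow 2 x).sub_const 1).mul (hasDerivAt_chebDeriv m 1 x) using 1
    have := chebDeriv_ode m 0 x
    simp only [nodalDeriv]
    push_cast at this ⊢
    linear_combination this
  | succ i =>
    convert! ((hasDerivAt_id x).mul (hasDerivAt_chebDeriv m (i + 1) x)).add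
      ((hasDerivAt_chebDeriv m i x).const_mul ((m : ℝ) ^ 2 + i)) using 1
    simp only [nodalDeriv, id]
    push_cast
    ring

theorem nodalDeriv_succ_self (m : ℕ) (hm : m ≠ 0) (x : ℝ) :
    nodalDeriv m (m + 1) x = m / 2 * sigmaN (m + 1) := by
  obtain ⟨j, rfl⟩ := Nat.exists_eq_succ_of_ne_zero hm
  simp only [nodalDeriv, chebDeriv_eq_zero_of_lt (Nat.lt_succ_self _), chebDeriv_self, sigmaN,
    Nat.succ_sub_one, pow_succ, Nat.factorial_succ]
  push_cast
  ring

theorem Competitor.abs_le_nodal {m k : ℕ} {S x₀ κ : ℝ} {F : ℕ → ℝ → ℝ} (hk : k + 1 ≤ m)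
    (hF : Competitor (m + 1) k S x₀ F) (hx₀ : x₀ ∈ Icc (-1) 1) (hκ : 0 < κ)
    (hzero : κ * nodalDeriv m (k + 1) x₀ = chebDeriv m (k + 1) x₀)
    (hS : S ≤ κ * (m / 2 * sigmaN (m + 1))) :
    |F k x₀| ≤ |chebDeriv m k x₀ - κ * nodalDeriv m k x₀| := by
  have hm : m ≠ 0 := by omega
  have hc : 0 < κ * (m / 2 * sigmaN (m + 1)) := by
    have := sigmaN_pos (m + 1)
    positivity
  refine hF.tower.abs_le_of_comparison (t := fun l => Polynomial.Chebyshev.node m (m - l))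
    (P := fun i x => chebDeriv m i x - κ * nodalDeriv m i x)
    (c := -(κ * (m / 2 * sigmaN (m + 1)))) (e := (-1) ^ m)
    ordConnected_Icc (by omega) (fun i _ x _ => ((hasDerivAt_chebDeriv m i x).sub
      ((hasDerivAt_nodalDeriv m i x).const_mul κ)).hasDerivWithinAt)
    hF.abs_le_one hF.abs_deriv_le (fun x _ => ?_) (abs_pos.2 (neg_ne_zero.2 hc.ne')) ?_ hx₀
    hF.deriv_eq_zero (by rw [hzero, sub_self]) (fun l _ => Polynomial.Chebyshev.node_mem_Icc)
    (fun l hl => Polynomial.Chebyshev.node_lt (by omega) (by omega)) (by simp) (fun l hl => ?_)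
  · simp only [nodalDeriv_succ_self m hm, chebDeriv_eq_zero_of_lt (Nat.lt_succ_self m), zero_sub]
  · rwa [abs_neg, abs_of_pos hc]
  · have hl' : l ≤ m := by omega
    simp only [nodalDeriv, sq_sub_one_mul_chebDeriv_one_node hm, mul_zero, sub_zero,
      chebDeriv_zero_node (Nat.sub_le m l), neg_one_pow_sub hl', le_refl]

end NodalComparison

section TiltedComparison

/-- The `i`-th derivative of the tilted Chebyshev polynomial `T_n(y) + β (1 + y) T_n'(y)`, which
takes the values `±1` of `T_n` at all extremal points of `T_n` other than `1`. -/
noncomputable def tiltedDeriv (n : ℕ) (β : ℝ) (i : ℕ) (y : ℝ) : ℝ :=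
  chebDeriv n i y + β * ((1 + y) * chebDeriv n (i + 1) y + i * chebDeriv n i y)

theorem hasDerivAt_tiltedDeriv (n : ℕ) (β : ℝ) (i : ℕ) (y : ℝ) :
    HasDerivAt (tiltedDeriv n β i) (tiltedDeriv n β (i + 1) y) y := by
  convert! (hasDerivAt_chebDeriv n i y).add (((((hasDerivAt_id y).const_add 1).mul
    (hasDerivAt_chebDeriv n (i + 1) y)).add
    ((hasDerivAt_chebDeriv n i y).const_mul (i : ℝ))).const_mul β) using 1
  simp only [tiltedDeriv, id]
  push_cast
  ring

theorem tiltedDeriv_self (n : ℕ) (β y : ℝ) :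
    tiltedDeriv n β n y = (1 + n * β) * sigmaN n := by
  rw [tiltedDeriv, chebDeriv_eq_zero_of_lt (Nat.lt_succ_self n), chebDeriv_self]
  ring

theorem tiltedDeriv_zero_node {n l : ℕ} (hl : l ∈ Icc 1 n) (β : ℝ) :
    tiltedDeriv n β 0 (Polynomial.Chebyshev.node n l) = (-1) ^ l := by
  have hlt : Polynomial.Chebyshev.node n l < 1 :=
    Polynomial.Chebyshev.node_eq_one (n := n) ▸ Polynomial.Chebyshev.node_lt hl.2 hl.1
  have hzero : (1 + Polynomial.Chebyshev.node n l) *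
      chebDeriv n 1 (Polynomial.Chebyshev.node n l) = 0 := by
    have hn : n ≠ 0 := (Nat.lt_of_lt_of_le hl.1 hl.2).ne'
    refine mul_left_cancel₀ (sub_neg.2 hlt).ne ?_
    linear_combination sq_sub_one_mul_chebDeriv_one_node hn l
  simp [tiltedDeriv, chebDeriv_zero_node hl.2, hzero]

theorem node_le_cos_pi_div {n j : ℕ} (hj : j ∈ Icc 1 n) :
    Polynomial.Chebyshev.node n j ≤ Real.cos (Real.pi / n) := by
  have := (Polynomial.Chebyshev.strictAntiOn_node n).antitoneOn (a := 1) (b := j)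
    (by have := hj.1.trans hj.2; simp; omega) (by simpa using by have := hj.2; omega) hj.1
  simpa [Polynomial.Chebyshev.node] using this

theorem Competitor.abs_le_tilted {n k : ℕ} {S x₀ s y β : ℝ} {F : ℕ → ℝ → ℝ} (hk : k + 2 ≤ n)
    (hF : Competitor n k S x₀ F) (hx₀ : x₀ ∈ Icc (-1) 1) (hs₀ : 0 < s)
    (hs : 1 + Real.cos (Real.pi / n) ≤ 2 * s) (hy : y = s * (x₀ + 1) - 1)
    (hzero : tiltedDeriv n β (k + 1) y = 0) (hβ : 0 < 1 + n * β)
    (hS : S ≤ s ^ n * ((1 + n * β) * sigmaN n)) :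
    |F k x₀| ≤ s ^ k * |tiltedDeriv n β k y| := by
  have hc : 0 < s ^ n * ((1 + n * β) * sigmaN n) :=
    mul_pos (pow_pos hs₀ n) (mul_pos hβ (sigmaN_pos n))
  have hy' : s * x₀ + (s - 1) = y := by rw [hy]; ring
  have htower : DerivTower n (tiltedDeriv n β) univ := fun i _ y _ =>
    (hasDerivAt_tiltedDeriv n β i y).hasDerivWithinAt
  have hcomparison := hF.tower.abs_le_of_comparison (x₀ := x₀)
    (t := fun l => (1 + Polynomial.Chebyshev.node n (n - l)) / s - 1) (e := (-1) ^ n)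
    (c := s ^ n * ((1 + n * β) * sigmaN n)) (S := S)
    ordConnected_Icc hk (htower.comp_affine (b := s - 1) (mapsTo_univ _ _)) hF.abs_le_one
    hF.abs_deriv_le (fun x _ => by rw [tiltedDeriv_self]) (abs_pos.2 hc.ne')
    (by rwa [abs_of_pos hc]) hx₀ hF.deriv_eq_zero (by rw [hy', hzero, mul_zero]) ?_ ?_ (by simp) ?_
  · rwa [hy', abs_mul, abs_of_pos (pow_pos hs₀ k)] at hcomparison
  · intro l hl
    have hle := node_le_cos_pi_div (n := n) (j := n - l) ⟨by omega, by omega⟩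
    have hge : -1 ≤ Polynomial.Chebyshev.node n (n - l) := Polynomial.Chebyshev.node_mem_Icc.1
    exact ⟨by linarith [div_nonneg (neg_le_iff_add_nonneg'.1 hge) hs₀.le],
      sub_le_iff_le_add.2 ((div_le_iff₀ hs₀).2 (by linarith))⟩
  · intro l hl
    have := Polynomial.Chebyshev.node_lt (n := n) (i := n - (l + 1)) (j := n - l)
      (by omega) (by omega)
    gcongr
  · intro l hl
    have hnode : s * ((1 + Polynomial.Chebyshev.node n (n - l)) / s - 1) + (s - 1) =
        Polynomial.Chebyshev.node n (n - l) := by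
      field_simp
      ring
    rw [hnode, pow_zero, one_mul, tiltedDeriv_zero_node ⟨by omega, Nat.sub_le n l⟩,
      neg_one_pow_sub hl.le]

end TiltedComparison

section TiltRatio

variable {n k : ℕ} {w x X : ℝ}

/-- The `(k+1)`-st derivative of the tilting term `(1 + x) T_n'(x)`. -/
noncomputable def tiltDen (n k : ℕ) (x : ℝ) : ℝ :=
  (1 + x) * chebDeriv n (k + 2) x + (k + 1) * chebDeriv n (k + 1) x

/-- The Laguerre-type expression `(1+x)(u'² - u u'') - u u'` in `u = T_n⁽ᵏ⁾`. Divided by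
`tiltDen n k x` it is the modulus at `x` of the `k`-th derivative of the tilted Chebyshev polynomial
whose `(k+1)`-st derivative vanishes at `x`. -/
noncomputable def tiltNum (n k : ℕ) (x : ℝ) : ℝ :=
  (1 + x) * (chebDeriv n (k + 1) x ^ 2 - chebDeriv n k x * chebDeriv n (k + 2) x) -
    chebDeriv n k x * chebDeriv n (k + 1) x

theorem tiltNum_nonneg (hk : k ≤ n) (x : ℝ) : 0 ≤ tiltNum n k x :=
  chebDeriv_laguerre_one_add hk x

theorem tiltDen_pos (hk : k + 2 ≤ n) (hw : IsGreatest {x | chebDeriv n (k + 1) x = 0} w)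
    (hx : w ≤ x) : 0 < tiltDen n k x := by
  have h₂ := chebDeriv_succ_pos_of_largest_zero_le hk hw hx
  have h₁ := chebDeriv_nonneg_of_largest_zero_le hw hx le_rfl
  have hw₀ := (largest_zero_mem_Ico (by omega) hw).1
  have : 0 < 1 + x := by linarith
  unfold tiltDen
  positivity

theorem hasDerivAt_tiltDen (n k : ℕ) (x : ℝ) : HasDerivAt (tiltDen n k)
    ((1 + x) * chebDeriv n (k + 3) x + (k + 2) * chebDeriv n (k + 2) x) x := by
  convert! (((hasDerivAt_id x).const_add 1).mul (hasDerivAt_chebDeriv n (k + 2) x)).add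
    ((hasDerivAt_chebDeriv n (k + 1) x).const_mul ((k : ℝ) + 1)) using 1
  simp only [id]
  ring

theorem hasDerivAt_tiltNum (n k : ℕ) (x : ℝ) : HasDerivAt (tiltNum n k)
    ((1 + x) * (chebDeriv n (k + 1) x * chebDeriv n (k + 2) x -
      chebDeriv n k x * chebDeriv n (k + 3) x) -
      2 * chebDeriv n k x * chebDeriv n (k + 2) x) x := by
  convert! (((hasDerivAt_id x).const_add 1).mul (((hasDerivAt_chebDeriv n (k + 1) x).pow 2).sub
    ((hasDerivAt_chebDeriv n k x).mul (hasDerivAt_chebDeriv n (k + 2) x)))).sub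
    ((hasDerivAt_chebDeriv n k x).mul (hasDerivAt_chebDeriv n (k + 1) x)) using 1
  simp only [id, Pi.mul_apply, Pi.pow_apply, Pi.sub_apply]
  push_cast
  ring

theorem tiltNum_div_tiltDen_le_max (hk : k + 2 ≤ n)
    (hw : IsGreatest {x | chebDeriv n (k + 1) x = 0} w) (hx : x ∈ Icc w X) :
    tiltNum n k x / tiltDen n k x ≤
      max (tiltNum n k w / tiltDen n k w) (tiltNum n k X / tiltDen n k X) := by
  refine le_max_of_hasDerivAt_mul (f := fun x => tiltNum n k x / tiltDen n k x)
    (G := fun x => (1 + x) * chebDeriv n (k + 1) x + k * chebDeriv n k x)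
    (H := fun x => tiltNum n (k + 1) x / tiltDen n k x ^ 2) hx (fun y hy => ?_)
    (fun y hy z _ hyz => ?_)
    fun y _ => div_nonneg (tiltNum_nonneg (by omega) y) (sq_nonneg _)
  · convert! (hasDerivAt_tiltNum n k y).div (hasDerivAt_tiltDen n k y)
      (tiltDen_pos hk hw hy.1).ne' using 1
    rw [← mul_div_assoc]
    congr 1
    simp only [tiltNum, tiltDen]
    ring
  · have hnonneg : ∀ {j}, k + 1 ≤ j → ∀ t ∈ Icc y z, 0 ≤ chebDeriv n j t := fun hj t ht =>
      chebDeriv_nonneg_of_largest_zero_le hw (hy.1.trans ht.1) hj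
    have hw₀ := (largest_zero_mem_Ico (by omega) hw).1
    have hy₀ : 0 ≤ 1 + y := by linarith [hy.1]
    have h₁ := hnonneg le_rfl y (left_mem_Icc.2 hyz)
    have := chebDeriv_le_chebDeriv hyz (hnonneg le_rfl)
    have := chebDeriv_le_chebDeriv hyz (hnonneg (Nat.le_succ (k + 1)))
    dsimp only
    gcongr
    linarith

theorem chebDeriv_div_tiltDen_mono (hk : k + 2 ≤ n)
    (hw : IsGreatest {x | chebDeriv n (k + 1) x = 0} w) (hx : w ≤ x) (hX : x ≤ X) :
    chebDeriv n (k + 1) x / tiltDen n k x ≤ chebDeriv n (k + 1) X / tiltDen n k X := by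
  refine monotoneOn_Icc_of_hasDerivAt_nonneg (f := fun x => chebDeriv n (k + 1) x / tiltDen n k x)
    (f' := fun x => tiltNum n (k + 1) x / tiltDen n k x ^ 2) (fun y hy => ?_)
    (fun y _ => div_nonneg (tiltNum_nonneg (by omega) y) (sq_nonneg _))
    (left_mem_Icc.2 hX) (right_mem_Icc.2 hX) hX
  convert! (hasDerivAt_chebDeriv n (k + 1) y).div (hasDerivAt_tiltDen n k y)
    (tiltDen_pos hk hw (hx.trans hy.1)).ne' using 1
  congr 1
  simp only [tiltNum, tiltDen]
  ring

theorem chebDeriv_div_tiltDen_one (hk : k + 2 ≤ n) :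
    chebDeriv n (k + 1) 1 / tiltDen n k 1 = (2 * k + 3) / (2 * n ^ 2 + k + 1) := by
  have hrec := chebDeriv_one_rec n (k + 1)
  have h₁ := chebDeriv_one_pos (show k + 1 ≤ n by omega)
  have h₂ := chebDeriv_one_pos hk
  have hden : tiltDen n k 1 ≠ 0 := by
    unfold tiltDen
    positivity
  push_cast at hrec
  rw [div_eq_div_iff hden (by positivity), tiltDen]
  linear_combination -2 * hrec

theorem tiltNum_div_tiltDen_largest_zero (hk : k + 2 ≤ n)
    (hw : IsGreatest {x | chebDeriv n (k + 1) x = 0} w) :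
    tiltNum n k w / tiltDen n k w = -chebDeriv n k w := by
  rw [div_eq_iff (tiltDen_pos hk hw le_rfl).ne', tiltNum, tiltDen,
    show chebDeriv n (k + 1) w = 0 from hw.1]
  ring

theorem Competitor.abs_le_tiltNum_div_tiltDen {S x₀ s y : ℝ} {F : ℕ → ℝ → ℝ} (hk : k + 2 ≤ n)
    (hw : IsGreatest {x | chebDeriv n (k + 1) x = 0} w) (hF : Competitor n k S x₀ F) (hS₀ : 0 < S)
    (hx₀ : x₀ ∈ Icc (-1) 1) (hs₀ : 0 < s) (hs : 1 + Real.cos (Real.pi / n) ≤ 2 * s)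
    (hy : y = s * (x₀ + 1) - 1) (hwy : w ≤ y)
    (hS : S ≤ s ^ n * ((1 - n * (chebDeriv n (k + 1) y / tiltDen n k y)) * sigmaN n)) :
    |F k x₀| ≤ s ^ k * (tiltNum n k y / tiltDen n k y) := by
  have hden := tiltDen_pos hk hw hwy
  have hβ : 0 < 1 - n * (chebDeriv n (k + 1) y / tiltDen n k y) :=
    pos_of_mul_pos_left (pos_of_mul_pos_right (hS₀.trans_le hS) (pow_pos hs₀ n).le)
      (sigmaN_pos n).le
  have hvalue : tiltedDeriv n (-(chebDeriv n (k + 1) y / tiltDen n k y)) k y =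
      -(tiltNum n k y / tiltDen n k y) := by
    simp only [tiltedDeriv, tiltNum]
    field_simp
    rw [tiltDen]
    ring
  have hbound := hF.abs_le_tilted hk hx₀ hs₀ hs hy
    (β := -(chebDeriv n (k + 1) y / tiltDen n k y)) ?_ (by linarith) (by convert hS using 3; ring)
  · rwa [hvalue, abs_neg, abs_of_nonneg (div_nonneg (tiltNum_nonneg (by omega) y) hden.le)]
      at hbound
  · simp only [tiltedDeriv]
    field_simp
    rw [tiltDen]
    push_cast
    ring

end TiltRatio

section CriticalBound

/-- The constant `η_k`, in units of `σ_n` the largest bound on the `n`-th derivative for which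
`criticalBound` is asserted. -/
noncomputable def criticalRatio (n k : ℕ) : ℝ :=
  ((n : ℝ) - ((k : ℝ) + 1)) / (2 * (2 * (n : ℝ) - ((k : ℝ) + 1)))

/-- The constant `λ_k T_n⁽ᵏ⁾(1)`, the bound for `|f⁽ᵏ⁾(x₀)|` when `|f⁽ⁿ⁾| ≤ η_k σ_n`. -/
noncomputable def criticalBound (n k : ℕ) : ℝ :=
  (1 / ((k : ℝ) + 1)) * (((n : ℝ) - 1) / ((n : ℝ) - 1 + (k : ℝ))) * chebDeriv n k 1

variable {n k : ℕ} {w x₀ : ℝ} {F : ℕ → ℝ → ℝ}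

theorem criticalRatio_pos (hk : k + 2 ≤ n) : 0 < criticalRatio n k := by
  have hkn : (k : ℝ) + 2 ≤ n := by exact_mod_cast hk
  have : (0 : ℝ) ≤ k := k.cast_nonneg
  apply div_pos <;> linarith

theorem criticalRatio_le_one_sub (hk : k + 2 ≤ n) :
    criticalRatio n k ≤ 1 - n * (chebDeriv n (k + 1) 1 / tiltDen n k 1) := by
  rw [chebDeriv_div_tiltDen_one hk]
  obtain ⟨d, rfl⟩ := Nat.exists_eq_add_of_le hk
  unfold criticalRatio
  push_cast
  rw [← mul_div_assoc, le_sub_iff_add_le, div_add_div _ _ (by linarith) (by positivity),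
    div_le_one (mul_pos (by linarith) (by positivity)), ← sub_nonneg]
  ring_nf
  positivity

theorem one_div_mul_chebDeriv_one_le_criticalBound (hk₁ : 1 ≤ k) (hk : k + 2 ≤ n) :
    1 / (2 * k + 1) * chebDeriv n k 1 ≤ criticalBound n k := by
  have hkn : (k : ℝ) + 2 ≤ n := by exact_mod_cast hk
  have hk₀ : (1 : ℝ) ≤ k := by exact_mod_cast hk₁
  refine mul_le_mul_of_nonneg_right ?_ (chebDeriv_one_pos (by omega)).le
  rw [div_mul_div_comm, div_le_div_iff₀ (by positivity) (by apply mul_pos <;> linarith)]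
  nlinarith

/- The second-order Taylor polynomial of `T_n⁽ᵏ⁺¹⁾` at its zero `w` bounds `T_n⁽ᵏ⁺¹⁾(1)` from below,
and the differential equation expresses all values involved through `T_n⁽ᵏ⁾(w)` and `T_n⁽ᵏ⁾(1)`. -/
theorem neg_chebDeriv_largest_zero_le (hk₁ : 1 ≤ k) (hk : k + 2 ≤ n)
    (hw : IsGreatest {x | chebDeriv n (k + 1) x = 0} w) :
    (2 * k + 1) * -chebDeriv n k w ≤ chebDeriv n k 1 := by
  have hzero : chebDeriv n (k + 1) w = 0 := hw.1
  obtain ⟨hw₀, hw₁⟩ := largest_zero_mem_Ico (by omega) hw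
  have hk₀ : (1 : ℝ) ≤ k := by exact_mod_cast hk₁
  have hkn : (k : ℝ) + 2 ≤ n := by exact_mod_cast hk
  have hN : 0 < (n : ℝ) ^ 2 - (k : ℝ) ^ 2 := by nlinarith
  have hode := chebDeriv_ode n k w
  have hode_succ := chebDeriv_ode n (k + 1) w
  have htaylor := chebDeriv_taylor_two_le (k := k + 1) hw₁.le fun x hx =>
    chebDeriv_nonneg_of_largest_zero_le hw hx.1 (by omega : k + 1 ≤ k + 1 + 3)
  have hone := chebDeriv_one_rec n k
  have hsecond := chebDeriv_nonneg_of_largest_zero_le hw le_rfl (by omega : k + 1 ≤ k + 2)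
  simp only [hzero, add_assoc, Nat.reduceAdd, mul_zero, zero_add, zero_sub]
    at hode hode_succ htaylor
  push_cast at hode_succ
  set v := -chebDeriv n k w
  have hNv : ((n : ℝ) ^ 2 - k ^ 2) * v = (1 - w) * ((1 + w) * chebDeriv n (k + 2) w) := by
    linear_combination -hode
  have hNv_nonneg : 0 ≤ ((n : ℝ) ^ 2 - k ^ 2) * v := by
    rw [hNv]
    exact mul_nonneg (by linarith) (mul_nonneg (by linarith) hsecond)
  have hquadratic : 2 * (1 + w) ^ 2 ≤ 2 + (2 * k + 5) * w := by nlinarith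
  refine le_of_mul_le_mul_left ?_ (by positivity : 0 < 2 * (1 + w) ^ 2 * ((n : ℝ) ^ 2 - k ^ 2))
  calc 2 * (1 + w) ^ 2 * ((n : ℝ) ^ 2 - k ^ 2) * ((2 * k + 1) * v)
      = (2 * k + 1) * (2 * (1 + w) ^ 2 * (((n : ℝ) ^ 2 - k ^ 2) * v)) := by ring
    _ ≤ (2 * k + 1) * ((2 + (2 * k + 5) * w) * (((n : ℝ) ^ 2 - k ^ 2) * v)) := by gcongr
    _ = (2 * k + 1) * (2 * (1 + w) ^ 2 * ((1 - w) * chebDeriv n (k + 2) w +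
          (1 - w) ^ 2 / 2 * chebDeriv n (k + 3) w)) := by
      rw [hNv]
      linear_combination -(2 * (k : ℝ) + 1) * (1 - w) * (1 + w) * hode_succ
    _ ≤ (2 * k + 1) * (2 * (1 + w) ^ 2 * chebDeriv n (k + 1) 1) := by gcongr
    _ = 2 * (1 + w) ^ 2 * ((n : ℝ) ^ 2 - k ^ 2) * chebDeriv n k 1 := by
      linear_combination 2 * (1 + w) ^ 2 * hone

theorem tiltNum_div_tiltDen_largest_zero_le (hk₁ : 1 ≤ k) (hk : k + 2 ≤ n)
    (hw : IsGreatest {x | chebDeriv n (k + 1) x = 0} w) :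
    tiltNum n k w / tiltDen n k w ≤ criticalBound n k := by
  refine le_trans ?_ (one_div_mul_chebDeriv_one_le_criticalBound hk₁ hk)
  rw [tiltNum_div_tiltDen_largest_zero hk hw, div_mul_eq_mul_div, one_mul,
    le_div_iff₀' (by positivity)]
  exact neg_chebDeriv_largest_zero_le hk₁ hk hw

theorem cos_pi_div_nonneg {n : ℕ} (hn : 2 ≤ n) : 0 ≤ Real.cos (Real.pi / n) := by
  have hn' : (2 : ℝ) ≤ n := by exact_mod_cast hn
  have hpi := Real.pi_pos
  exact Real.cos_nonneg_of_mem_Icc ⟨by linarith [div_nonneg hpi.le n.cast_nonneg], by gcongr⟩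

/- Where the dilation by `s` would move `x₀` to the left of `w`, a smaller one moves it to `w`. -/
theorem Competitor.abs_le_criticalBound_of_dilation {s Y : ℝ} (hk₁ : 1 ≤ k) (hk : k + 2 ≤ n)
    (hw : IsGreatest {x | chebDeriv n (k + 1) x = 0} w)
    (hF : Competitor n k (criticalRatio n k * sigmaN n) x₀ F) (hx₀ : x₀ ∈ Icc w 1)
    (hs : 1 + Real.cos (Real.pi / n) ≤ 2 * s) (hs₁ : s ≤ 1) (hwY : w ≤ Y)
    (hY : s * (x₀ + 1) - 1 ≤ Y)
    (hη : criticalRatio n k ≤ s ^ n * (1 - n * (chebDeriv n (k + 1) Y / tiltDen n k Y)))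
    (hV : s ^ k * (tiltNum n k Y / tiltDen n k Y) ≤ criticalBound n k) :
    |F k x₀| ≤ criticalBound n k := by
  have hw₀ := (largest_zero_mem_Ico (by omega) hw).1
  have hs₀ : 0 < s := by linarith [cos_pi_div_nonneg (show 2 ≤ n by omega)]
  have hVw := tiltNum_div_tiltDen_largest_zero_le hk₁ hk hw
  have hpow_mul_le {r : ℝ} (hr₀ : 0 < r) (hr₁ : r ≤ 1) :
      r ^ k * (tiltNum n k w / tiltDen n k w) ≤ criticalBound n k :=
    (mul_le_of_le_one_left (div_nonneg (tiltNum_nonneg (by omega) w) (tiltDen_pos hk hw le_rfl).le)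
      (pow_le_one₀ hr₀.le hr₁)).trans hVw
  obtain ⟨r, hsr, hwr, hrY, hVr⟩ : ∃ r, s ≤ r ∧ w ≤ r * (x₀ + 1) - 1 ∧ r * (x₀ + 1) - 1 ≤ Y ∧
      r ^ k * (tiltNum n k (r * (x₀ + 1) - 1) / tiltDen n k (r * (x₀ + 1) - 1)) ≤
        criticalBound n k := by
    rcases le_total w (s * (x₀ + 1) - 1) with hws | hws
    · refine ⟨s, le_rfl, hws, hY, ?_⟩
      rcases le_max_iff.1 (tiltNum_div_tiltDen_le_max hk hw ⟨hws, hY⟩) with hle | hle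
      · exact (mul_le_mul_of_nonneg_left hle (by positivity)).trans (hpow_mul_le hs₀ hs₁)
      · exact (mul_le_mul_of_nonneg_left hle (by positivity)).trans hV
    · have hx₀' : 0 < x₀ + 1 := by linarith [hx₀.1]
      have hmove : (1 + w) / (x₀ + 1) * (x₀ + 1) - 1 = w := by
        field_simp
        ring
      refine ⟨(1 + w) / (x₀ + 1), (le_div_iff₀ hx₀').2 (by linarith), hmove.ge,
        hmove.le.trans hwY, ?_⟩
      rw [hmove]
      exact hpow_mul_le (by positivity) ((div_le_one hx₀').2 (by linarith [hx₀.1]))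
  have hr₀ : 0 < r := hs₀.trans_le hsr
  have hslope := chebDeriv_div_tiltDen_mono hk hw hwr hrY
  have hslope_Y : 0 < 1 - n * (chebDeriv n (k + 1) Y / tiltDen n k Y) :=
    pos_of_mul_pos_right ((criticalRatio_pos hk).trans_le hη) (pow_pos hs₀ n).le
  refine (hF.abs_le_tiltNum_div_tiltDen hk hw (mul_pos (criticalRatio_pos hk) (sigmaN_pos n))
    ⟨by linarith [hx₀.1], hx₀.2⟩ hr₀ (by linarith) rfl hwr ?_).trans hVr
  rw [← mul_assoc]
  refine mul_le_mul_of_nonneg_right (hη.trans ?_) (sigmaN_pos n).le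
  gcongr

theorem Competitor.abs_le_criticalBound_of_tilt_le {X : ℝ} (hk₁ : 1 ≤ k) (hk : k + 2 ≤ n)
    (hw : IsGreatest {x | chebDeriv n (k + 1) x = 0} w)
    (hF : Competitor n k (criticalRatio n k * sigmaN n) x₀ F) (hx₀ : w ≤ x₀) (hX : X ∈ Icc x₀ 1)
    (hV : tiltNum n k X / tiltDen n k X ≤ criticalBound n k) : |F k x₀| ≤ criticalBound n k := by
  refine hF.abs_le_criticalBound_of_dilation (s := 1) hk₁ hk hw ⟨hx₀, hX.1.trans hX.2⟩
    (by linarith [Real.cos_le_one (Real.pi / n)]) le_rfl (hx₀.trans hX.1) (by linarith [hX.1]) ?_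
    (by rwa [one_pow, one_mul])
  have hslope := chebDeriv_div_tiltDen_mono hk hw (hx₀.trans hX.1) hX.2
  rw [one_pow, one_mul]
  refine (criticalRatio_le_one_sub hk).trans ?_
  gcongr

end CriticalBound

section DegreeRecurrence

variable {m k : ℕ}

theorem chebDeriv_succ_eq_of_degree_rec (hm : m ≠ 0)
    (h : ∀ x, ((m : ℝ) + 1) * (m + k) * chebDeriv m k x =
      m * (((m : ℝ) + 1 - k) * x * chebDeriv (m + 1 : ℕ) k x +
        (1 - x ^ 2) * chebDeriv (m + 1 : ℕ) (k + 1) x)) (x : ℝ) :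
    ((m : ℝ) + 1) * chebDeriv m (k + 1) x = m * (x * chebDeriv (m + 1 : ℕ) (k + 1) x -
      ((m : ℝ) + 1 - k) * chebDeriv (m + 1 : ℕ) k x) := by
  have hleft := (hasDerivAt_chebDeriv m k x).const_mul (((m : ℝ) + 1) * (m + k))
  rw [funext h] at hleft
  have hright := ((((hasDerivAt_id x).const_mul ((m : ℝ) + 1 - k)).mul
    (hasDerivAt_chebDeriv (m + 1 : ℕ) k x)).add (((hasDerivAt_pow 2 x).const_sub 1).mul
    (hasDerivAt_chebDeriv (m + 1 : ℕ) (k + 1) x))).const_mul (m : ℝ)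
  have hderiv := hleft.unique hright
  have hode := chebDeriv_ode (m + 1) k x
  simp only [id] at hderiv
  push_cast at hode hderiv ⊢
  refine mul_left_cancel₀ (by positivity : (m : ℝ) + k ≠ 0) ?_
  linear_combination hderiv + m * hode

theorem chebDeriv_degree_rec (hm : m ≠ 0) (k : ℕ) (x : ℝ) :
    ((m : ℝ) + 1) * (m + k) * chebDeriv m k x =
      m * (((m : ℝ) + 1 - k) * x * chebDeriv (m + 1 : ℕ) k x +
        (1 - x ^ 2) * chebDeriv (m + 1 : ℕ) (k + 1) x) := by
  induction k generalizing x with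
  | zero =>
    have := congr_arg (eval x)
      (Polynomial.Chebyshev.one_sub_X_sq_mul_derivative_T_eq_poly_in_T (R := ℝ) m)
    simp only [eval_mul, eval_sub, eval_one, eval_pow, eval_X, eval_add, eval_intCast] at this
    simp only [chebDeriv, Function.iterate_zero, id, Function.iterate_succ, Function.comp]
    push_cast at this ⊢
    linear_combination -(m : ℝ) * this
  | succ k ih =>
    have hsucc := chebDeriv_succ_eq_of_degree_rec hm ih x
    have hode := chebDeriv_ode (m + 1) k x
    push_cast at hode hsucc ⊢
    linear_combination ((m : ℝ) + k + 1) * hsucc - m * hode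

theorem nodalDeriv_eq (hm : m ≠ 0) (hk : k ≠ 0) (x : ℝ) :
    ((m : ℝ) + 1) * (m + k) * (m + k - 1) * nodalDeriv m k x =
      m * ((k * (2 * m ^ 2 + k - 1) + m * (m - 1) * (m + 1 - k) * (1 - x ^ 2)) *
          chebDeriv (m + 1 : ℕ) k x -
        m * (m - 1) * x * (1 - x ^ 2) * chebDeriv (m + 1 : ℕ) (k + 1) x) := by
  obtain ⟨j, rfl⟩ := Nat.exists_eq_succ_of_ne_zero hk
  have hrec := chebDeriv_degree_rec hm j x
  have hrec_succ := chebDeriv_degree_rec hm (j + 1) x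
  have hode := chebDeriv_ode (m + 1) j x
  simp only [nodalDeriv]
  push_cast at *
  linear_combination (m + j) * x * hrec_succ + (m + j + 1) * (m ^ 2 + j) * hrec +
    m * x * ((m : ℝ) ^ 2 + j) * hode

theorem criticalBound_succ_mul (hm : m ≠ 0) :
    criticalBound (m + 1) k * ((k + 1) * ((m : ℝ) + 1 - k)) = (m + 1) * chebDeriv m k 1 := by
  have hrec := chebDeriv_degree_rec hm k 1
  have hden : (m : ℝ) + 1 - 1 + k ≠ 0 := by
    rw [add_sub_cancel_right]
    positivity
  unfold criticalBound
  push_cast at hrec ⊢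
  field_simp
  linear_combination -hrec

end DegreeRecurrence

section NodalBound

variable {m k : ℕ} {w x x₀ : ℝ} {F : ℕ → ℝ → ℝ}

theorem nodal_wronskian_nonneg (m k : ℕ) (x : ℝ) :
    0 ≤ chebDeriv m (k + 1) x * nodalDeriv m (k + 2) x -
      chebDeriv m (k + 2) x * nodalDeriv m (k + 1) x := by
  have hlaguerre := mul_nonneg (by positivity : 0 ≤ (m : ℝ) ^ 2 + k) (chebDeriv_laguerre m k x)
  simp only [nodalDeriv]
  push_cast
  linarith [sq_nonneg (chebDeriv m (k + 1) x)]

theorem nodalDeriv_succ_one (m k : ℕ) : nodalDeriv m (k + 1) 1 * ((m : ℝ) ^ 2 - k ^ 2) =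
    (k + 1) * (2 * m ^ 2 + k) * chebDeriv m (k + 1) 1 := by
  simp only [nodalDeriv]
  linear_combination (-(m : ℝ) ^ 2 - k) * chebDeriv_one_rec m k

theorem nodalDeriv_div_chebDeriv_le (hk : k + 1 ≤ m) (hx₁ : x ≤ 1)
    (hpos : ∀ y ∈ Icc x 1, 0 < chebDeriv m (k + 1) y) :
    nodalDeriv m (k + 1) x / chebDeriv m (k + 1) x ≤
      (k + 1) * (2 * m ^ 2 + k) / ((m : ℝ) ^ 2 - k ^ 2) := by
  have hmono := monotoneOn_Icc_of_hasDerivAt_nonneg (fun y hy =>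
      (hasDerivAt_nodalDeriv m (k + 1) y).div (hasDerivAt_chebDeriv m (k + 1) y) (hpos y hy).ne')
    (fun y _ => div_nonneg (by linarith [nodal_wronskian_nonneg m k y]) (sq_nonneg _))
    (left_mem_Icc.2 hx₁) (right_mem_Icc.2 hx₁) hx₁
  have hkm : (k : ℝ) + 1 ≤ m := by exact_mod_cast hk
  have hN : 0 < (m : ℝ) ^ 2 - k ^ 2 := by nlinarith [k.cast_nonneg (α := ℝ)]
  refine hmono.trans (le_of_eq ?_)
  rw [Pi.div_apply, div_eq_div_iff (hpos 1 (right_mem_Icc.2 hx₁)).ne' hN.ne', nodalDeriv_succ_one]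

theorem criticalRatio_mul_le (hk₁ : 1 ≤ k) (hk : k + 1 ≤ m) :
    criticalRatio (m + 1) k * ((k + 1) * (2 * m ^ 2 + k) / ((m : ℝ) ^ 2 - k ^ 2)) ≤ m / 2 := by
  obtain ⟨d, rfl⟩ := Nat.exists_eq_add_of_le hk
  obtain ⟨j, rfl⟩ := Nat.exists_eq_add_of_le' hk₁
  unfold criticalRatio
  push_cast
  have hN : (0 : ℝ) < (j + 1 + 1 + d) ^ 2 - (j + 1) ^ 2 := by ring_nf; positivity
  have hden : (0 : ℝ) < 2 * (2 * (j + 1 + 1 + d + 1) - (j + 1 + 1)) := by ring_nf; positivity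
  rw [div_mul_div_comm, div_le_div_iff₀ (mul_pos hden hN) two_pos, ← sub_nonneg]
  ring_nf
  positivity

theorem Competitor.abs_le_nodal_ratio (hk₁ : 1 ≤ k) (hk : k + 1 ≤ m)
    (hF : Competitor (m + 1) k (criticalRatio (m + 1) k * sigmaN (m + 1)) x₀ F)
    (hx₀ : x₀ ∈ Icc (-1) 1) (hpos : ∀ y ∈ Icc x₀ 1, 0 < chebDeriv m (k + 1) y)
    (hnodal : 0 < nodalDeriv m (k + 1) x₀) :
    |F k x₀| ≤ chebDeriv m k x₀ -
      chebDeriv m (k + 1) x₀ * nodalDeriv m k x₀ / nodalDeriv m (k + 1) x₀ := by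
  have hpos₀ := hpos x₀ (left_mem_Icc.2 hx₀.2)
  have hratio := nodalDeriv_div_chebDeriv_le hk hx₀.2 hpos
  have hη : criticalRatio (m + 1) k ≤
      chebDeriv m (k + 1) x₀ / nodalDeriv m (k + 1) x₀ * (m / 2) := by
    have hmul := (mul_le_mul_of_nonneg_left hratio
      (criticalRatio_pos (by omega)).le).trans (criticalRatio_mul_le hk₁ hk)
    rw [div_mul_eq_mul_div, le_div_iff₀ hnodal]
    rwa [← mul_div_assoc, div_le_iff₀ hpos₀, mul_comm (_ / 2)] at hmul
  have hbound := hF.abs_le_nodal hk hx₀ (div_pos hpos₀ hnodal) (div_mul_cancel₀ _ hnodal.ne') (by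
    rw [← mul_assoc]
    exact mul_le_mul_of_nonneg_right hη (sigmaN_pos _).le)
  rw [div_mul_eq_mul_div] at hbound
  refine hbound.trans_eq (abs_of_nonneg ?_)
  obtain ⟨j, rfl⟩ := Nat.exists_eq_add_of_le' hk₁
  rw [sub_nonneg, div_le_iff₀ hnodal]
  linarith [nodal_wronskian_nonneg m j x₀]

theorem nodal_ratio_one_le_criticalBound (hk₁ : 1 ≤ k) (hk : k + 1 ≤ m) :
    chebDeriv m k 1 - chebDeriv m (k + 1) 1 * nodalDeriv m k 1 / nodalDeriv m (k + 1) 1 ≤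
      criticalBound (m + 1) k := by
  have hB := criticalBound_succ_mul (k := k) (show m ≠ 0 by omega)
  have hnodal_succ := nodalDeriv_succ_one m k
  have hpos := chebDeriv_one_pos (show k ≤ m by omega)
  have hpos_succ := chebDeriv_one_pos hk
  obtain ⟨d, rfl⟩ := Nat.exists_eq_add_of_le hk
  obtain ⟨j, rfl⟩ := Nat.exists_eq_add_of_le' hk₁
  have hnodal := nodalDeriv_succ_one (j + 1 + 1 + d) j
  have hne : nodalDeriv (j + 1 + 1 + d) (j + 1 + 1) 1 ≠ 0 := by
    simp only [nodalDeriv]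
    positivity
  push_cast at hB hnodal hnodal_succ
  have hnodal_eq : nodalDeriv (j + 1 + 1 + d) (j + 1) 1 = (j + 1) * (2 * (j + 1 + 1 + d) ^ 2 + j) /
      ((d + 2) * (2 * j + d + 2)) * chebDeriv (j + 1 + 1 + d : ℕ) (j + 1) 1 := by
    rw [div_mul_eq_mul_div, eq_div_iff (by positivity)]
    push_cast
    linear_combination hnodal
  have hratio : chebDeriv (j + 1 + 1 + d : ℕ) (j + 1 + 1) 1 /
      nodalDeriv (j + 1 + 1 + d) (j + 1 + 1) 1 = (d + 1) * (2 * j + d + 3) /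
        ((j + 2) * (2 * (j + 1 + 1 + d) ^ 2 + j + 1)) := by
    rw [div_eq_div_iff hne (by positivity)]
    push_cast
    linear_combination -hnodal_succ
  have hB_eq : criticalBound (j + 1 + 1 + d + 1) (j + 1) =
      (j + d + 3) / ((j + 2) * (d + 2)) * chebDeriv (j + 1 + 1 + d : ℕ) (j + 1) 1 := by
    rw [div_mul_eq_mul_div, eq_div_iff (by positivity)]
    push_cast
    linear_combination hB
  rw [mul_div_right_comm, hratio, hnodal_eq, hB_eq, ← mul_assoc, ← one_sub_mul]
  refine mul_le_mul_of_nonneg_right ?_ hpos.le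
  rw [sub_le_iff_le_add, div_mul_div_comm, div_add_div _ _ (by positivity) (by positivity),
    one_le_div (by positivity), ← sub_nonneg]
  ring_nf
  positivity

theorem chebDeriv_pred_succ_pos (hk : k + 1 ≤ m)
    (hw : IsGreatest {x | chebDeriv (m + 1 : ℕ) (k + 1) x = 0} w) (hx : x ∈ Icc w 1) :
    0 < chebDeriv m (k + 1) x := by
  rcases hx.2.eq_or_lt with rfl | hx₁
  · exact chebDeriv_one_pos hk
  have hw₀ := (largest_zero_mem_Ico (by omega) hw).1
  have hrec := chebDeriv_degree_rec (show m ≠ 0 by omega) (k + 1) x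
  have h₁ := chebDeriv_nonneg_of_largest_zero_le hw hx.1 le_rfl
  have h₂ := chebDeriv_succ_pos_of_largest_zero_le (by omega) hw hx.1
  have hkm : (k : ℝ) + 1 ≤ m := by exact_mod_cast hk
  have hm : (0 : ℝ) < m := by exact_mod_cast (by omega : 0 < m)
  have hx₀ : 0 ≤ x := hw₀.trans hx.1
  have hsq : 0 < 1 - x ^ 2 := by nlinarith
  have hcoef : 0 ≤ (m : ℝ) + 1 - (k + 1 : ℕ) := by
    push_cast
    linarith
  refine pos_of_mul_pos_right (lt_of_lt_of_eq ?_ hrec.symm) (by positivity)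
  positivity

theorem chebDeriv_pred_nonneg (hk : k + 1 ≤ m)
    (hw : IsGreatest {x | chebDeriv (m + 1 : ℕ) (k + 1) x = 0} w) (hx : x ∈ Icc w 1)
    (hu : 0 ≤ chebDeriv (m + 1 : ℕ) k x) : 0 ≤ chebDeriv m k x := by
  have hw₀ := (largest_zero_mem_Ico (by omega) hw).1
  have hrec := chebDeriv_degree_rec (show m ≠ 0 by omega) k x
  have h₁ := chebDeriv_nonneg_of_largest_zero_le hw hx.1 le_rfl
  have hkm : (k : ℝ) + 1 ≤ m := by exact_mod_cast hk
  have hm : (0 : ℝ) < m := by exact_mod_cast (by omega : 0 < m)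
  have hx₀ : 0 ≤ x := hw₀.trans hx.1
  have hsq : 0 ≤ 1 - x ^ 2 := by nlinarith [hx.2]
  have hcoef : 0 ≤ (m : ℝ) + 1 - k := by linarith
  refine nonneg_of_mul_nonneg_right (le_of_le_of_eq ?_ hrec.symm)
    (by positivity : (0 : ℝ) < ((m : ℝ) + 1) * (m + k))
  positivity

theorem nodalDeriv_succ_pos (hk : k + 1 ≤ m)
    (hw : IsGreatest {x | chebDeriv (m + 1 : ℕ) (k + 1) x = 0} w) (hx : x ∈ Ioc w 1)
    (hu : 0 ≤ chebDeriv (m + 1 : ℕ) k x) : 0 < nodalDeriv m (k + 1) x := by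
  have hx₀ : 0 < x := (largest_zero_mem_Ico (by omega) hw).1.trans_lt hx.1
  have hb := chebDeriv_pred_succ_pos hk hw (Ioc_subset_Icc_self hx)
  have hc := chebDeriv_pred_nonneg hk hw (Ioc_subset_Icc_self hx) hu
  simp only [nodalDeriv]
  positivity

theorem Competitor.abs_le_criticalBound_of_nodal_nonneg (hk₁ : 1 ≤ k) (hk : k + 1 ≤ m)
    (hw : IsGreatest {x | chebDeriv (m + 1 : ℕ) (k + 1) x = 0} w)
    (hF : Competitor (m + 1) k (criticalRatio (m + 1) k * sigmaN (m + 1)) x₀ F)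
    (hx₀ : x₀ ∈ Ioc w 1) (hu : 0 ≤ chebDeriv (m + 1 : ℕ) k x₀)
    (hnodal : ∀ x ∈ Icc x₀ 1, 0 ≤ nodalDeriv m k x) : |F k x₀| ≤ criticalBound (m + 1) k := by
  have hw₀ := (largest_zero_mem_Ico (by omega) hw).1
  have hpos : ∀ x ∈ Icc x₀ 1, 0 < chebDeriv m (k + 1) x := fun x hx =>
    chebDeriv_pred_succ_pos hk hw ⟨hx₀.1.le.trans hx.1, hx.2⟩
  have hnodal_succ : ∀ x ∈ Icc x₀ 1, 0 < nodalDeriv m (k + 1) x := fun x hx =>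
    nodalDeriv_succ_pos hk hw ⟨hx₀.1.trans_le hx.1, hx.2⟩ <| hu.trans <|
      chebDeriv_le_chebDeriv hx.1 fun y hy =>
        chebDeriv_nonneg_of_largest_zero_le hw (hx₀.1.le.trans hy.1) le_rfl
  refine (hF.abs_le_nodal_ratio hk₁ hk ⟨by linarith [hx₀.1], hx₀.2⟩ hpos
    (hnodal_succ _ (left_mem_Icc.2 hx₀.2))).trans
    (le_trans ?_ (nodal_ratio_one_le_criticalBound hk₁ hk))
  refine monotoneOn_Icc_of_hasDerivAt_nonneg
    (f := fun x => chebDeriv m k x -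
      chebDeriv m (k + 1) x * nodalDeriv m k x / nodalDeriv m (k + 1) x)
    (f' := fun x => nodalDeriv m k x * (chebDeriv m (k + 1) x * nodalDeriv m (k + 2) x -
      chebDeriv m (k + 2) x * nodalDeriv m (k + 1) x) / nodalDeriv m (k + 1) x ^ 2)
    (fun y hy => ?_) (fun y hy => div_nonneg
      (mul_nonneg (hnodal y hy) (nodal_wronskian_nonneg m k y)) (sq_nonneg _))
    (left_mem_Icc.2 hx₀.2) (right_mem_Icc.2 hx₀.2) hx₀.2
  have hne := (hnodal_succ y hy).ne'
  convert! (hasDerivAt_chebDeriv m k y).sub (((hasDerivAt_chebDeriv m (k + 1) y).mul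
    (hasDerivAt_nodalDeriv m k y)).div (hasDerivAt_nodalDeriv m (k + 1) y) hne) using 1
  simp only [Pi.mul_apply]
  field_simp
  ring

end NodalBound

section Crossing

variable {m k n : ℕ} {w x x₀ : ℝ} {F : ℕ → ℝ → ℝ}

theorem nodalDeriv_nonneg_of_le (hm : m ≠ 0) (hk₁ : 1 ≤ k) (hk : k ≤ m) (hx : x ∈ Icc 0 1)
    (hu : 0 ≤ chebDeriv (m + 1 : ℕ) (k + 1) x)
    (h : x * (1 - x ^ 2) * chebDeriv (m + 1 : ℕ) (k + 1) x ≤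
      2 * k * chebDeriv (m + 1 : ℕ) k x) : 0 ≤ nodalDeriv m k x := by
  obtain ⟨hx₀, hx₁⟩ := hx
  have hk₀ : (1 : ℝ) ≤ k := by exact_mod_cast hk₁
  have hm₀ : (1 : ℝ) ≤ m := by exact_mod_cast Nat.one_le_iff_ne_zero.2 hm
  have hkm : (k : ℝ) ≤ m := by exact_mod_cast hk
  have hsq : 0 ≤ 1 - x ^ 2 := by nlinarith
  have hu_k : 0 ≤ chebDeriv (m + 1 : ℕ) k x :=
    nonneg_of_mul_nonneg_right ((by positivity : (0 : ℝ) ≤ _).trans h) (by positivity)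
  have hm_pred : 0 ≤ (m : ℝ) - 1 := by linarith
  have hmk : 0 ≤ (m : ℝ) + 1 - k := by linarith
  have hmul := mul_le_mul_of_nonneg_left h (mul_nonneg m.cast_nonneg hm_pred)
  refine nonneg_of_mul_nonneg_right (le_of_le_of_eq ?_ (nodalDeriv_eq hm (by omega) x).symm)
    (by apply mul_pos <;> [positivity; linarith])
  refine mul_nonneg m.cast_nonneg ?_
  have hcurv : 0 ≤ (m : ℝ) * (m - 1) * (m + 1 - k) * (1 - x ^ 2) * chebDeriv (m + 1 : ℕ) k x := by
    positivity
  have hvalue : 0 ≤ k * (2 * m + (k - 1)) * chebDeriv (m + 1 : ℕ) k x := by positivity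
  linarith

theorem chebDeriv_largest_zero_neg (hk₁ : 1 ≤ k) (hk : k + 2 ≤ n)
    (hw : IsGreatest {x | chebDeriv n (k + 1) x = 0} w) : chebDeriv n k w < 0 := by
  have hode := chebDeriv_ode n k w
  have hpos := chebDeriv_succ_pos_of_largest_zero_le hk hw le_rfl
  obtain ⟨hw₀, hw₁⟩ := largest_zero_mem_Ico (by omega) hw
  have hkn : (k : ℝ) + 2 ≤ n := by exact_mod_cast hk
  have hk₀ : (1 : ℝ) ≤ k := by exact_mod_cast hk₁
  rw [show chebDeriv n (k + 1) w = 0 from hw.1, mul_zero, zero_sub] at hode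
  have hleft := mul_pos (show 0 < 1 - w ^ 2 by nlinarith) hpos
  rw [hode, neg_pos] at hleft
  exact neg_of_mul_neg_right hleft (by nlinarith)

theorem forall_le_or_exists_crossing (hk₁ : 1 ≤ k) (hk : k + 2 ≤ n)
    (hw : IsGreatest {x | chebDeriv n (k + 1) x = 0} w) (hx₀ : x₀ ∈ Icc w 1) :
    (∀ x ∈ Icc x₀ 1, x * (1 - x ^ 2) * chebDeriv n (k + 1) x ≤ 2 * k * chebDeriv n k x) ∨
      ∃ X ∈ Ioo w 1, x₀ ≤ X ∧
        X * (1 - X ^ 2) * chebDeriv n (k + 1) X = 2 * k * chebDeriv n k X := by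
  have hk₀ : (1 : ℝ) ≤ k := by exact_mod_cast hk₁
  refine or_iff_not_imp_left.2 fun hlt => ?_
  push Not at hlt
  obtain ⟨y, hy, hlt⟩ := hlt
  have hcont : Continuous fun x =>
      2 * k * chebDeriv n k x - x * (1 - x ^ 2) * chebDeriv n (k + 1) x := by
    have := continuous_chebDeriv n k
    have := continuous_chebDeriv n (k + 1)
    fun_prop
  have hone := chebDeriv_one_pos (show k ≤ n by omega)
  obtain ⟨X, hX, hzero⟩ := intermediate_value_Icc hy.2 hcont.continuousOn
    (show (0 : ℝ) ∈ Icc _ _ from ⟨(sub_neg.2 hlt).le, by simpa using by positivity⟩)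
  refine ⟨X, ⟨(hx₀.1.trans (hy.1.trans hX.1)).lt_of_ne ?_, hX.2.lt_of_ne ?_⟩,
    hy.1.trans hX.1, (sub_eq_zero.1 hzero).symm⟩
  · rintro rfl
    have hw_zero : chebDeriv n (k + 1) w = 0 := hw.1
    simp only [hw_zero, mul_zero, sub_zero] at hzero
    nlinarith [chebDeriv_largest_zero_neg hk₁ hk hw]
  · rintro rfl
    simp only [one_pow, sub_self, mul_zero, zero_mul, sub_zero] at hzero
    exact absurd hzero (by positivity)

/- Without a crossing, the comparison with `(x² - 1) T_{n-1}'(x)` applies. -/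
theorem Competitor.abs_le_criticalBound_or_exists_crossing (hk₁ : 1 ≤ k) (hk : k + 2 ≤ n)
    (hw : IsGreatest {x | chebDeriv n (k + 1) x = 0} w)
    (hF : Competitor n k (criticalRatio n k * sigmaN n) x₀ F) (hx₀ : x₀ ∈ Icc w 1) :
    |F k x₀| ≤ criticalBound n k ∨ ∃ X ∈ Ioo w 1, x₀ ≤ X ∧
      X * (1 - X ^ 2) * chebDeriv n (k + 1) X = 2 * k * chebDeriv n k X := by
  refine (forall_le_or_exists_crossing hk₁ hk hw hx₀).imp_left fun hle => ?_
  obtain ⟨m, rfl⟩ := Nat.exists_eq_add_of_le' (show 1 ≤ n by omega)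
  have hw₀ := (largest_zero_mem_Ico (by omega) hw).1
  have hk₀ : (1 : ℝ) ≤ k := by exact_mod_cast hk₁
  have hlex₀ := hle x₀ (left_mem_Icc.2 hx₀.2)
  have hwx₀ : w < x₀ := hx₀.1.lt_of_ne fun h => by
    subst h
    have hw_zero : chebDeriv (m + 1 : ℕ) (k + 1) w = 0 := hw.1
    rw [hw_zero, mul_zero] at hlex₀
    nlinarith [chebDeriv_largest_zero_neg hk₁ hk hw]
  have hu (x : ℝ) (hx : x ∈ Icc x₀ 1) :=
    chebDeriv_nonneg_of_largest_zero_le hw (hwx₀.le.trans hx.1) le_rfl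
  have hx₀_nonneg : 0 ≤ x₀ := hw₀.trans hwx₀.le
  refine hF.abs_le_criticalBound_of_nodal_nonneg hk₁ (by omega) hw ⟨hwx₀, hx₀.2⟩ ?_
    fun x hx => nodalDeriv_nonneg_of_le (by omega) hk₁ (by omega)
      ⟨hx₀_nonneg.trans hx.1, hx.2⟩ (hu x hx) (hle x hx)
  have hsq : 0 ≤ x₀ * (1 - x₀ ^ 2) := mul_nonneg hx₀_nonneg (by nlinarith [hx₀.2])
  exact nonneg_of_mul_nonneg_right
    ((mul_nonneg hsq (hu x₀ (left_mem_Icc.2 hx₀.2))).trans hlex₀) (by positivity)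

end Crossing

section CrossingInequality

variable {k q X : ℝ}

theorem crossing_curvature_ge (hk : 3 ≤ k) (hX : X ∈ Ioo 0 1) (hq : 0 < q)
    (hfourth : (2 * k + 1) * (2 * k + 5) * (2 * k - 1 + X ^ 2) ≤
      q * (12 * k + 4 + 2 * k * q + (4 * k ^ 2 + 12 * k + 11) * X ^ 2)) :
    k * ((53 - 21 * X) / 30) ≤ q := by
  by_contra! hlt
  have hk₀ : 0 < k := by linarith
  have hX₀ := hX.1
  have hcoef : 0 ≤ 53 - 21 * X := by linarith [hX.2]
  have hle := hfourth.trans (show q * (12 * k + 4 + 2 * k * q + (4 * k ^ 2 + 12 * k + 11) * X ^ 2) ≤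
      k * ((53 - 21 * X) / 30) * (12 * k + 4 + 2 * k * (k * ((53 - 21 * X) / 30)) +
        (4 * k ^ 2 + 12 * k + 11) * X ^ 2) by gcongr)
  obtain ⟨Y, hY⟩ : ∃ Y, X + Y = 1 := ⟨1 - X, by ring⟩
  obtain ⟨j, rfl⟩ : ∃ j, k = j + 3 := ⟨k - 3, by ring⟩
  have hY₀ : 0 < Y := by linarith [hX.2]
  have hj : 0 ≤ j := by linarith
  have hbernstein : 0 < (2 * (j + 3) + 1) * (2 * (j + 3) + 5) *
        ((2 * (j + 3) - 1) * (X + Y) ^ 2 + X ^ 2) * (X + Y) -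
      (j + 3) * ((53 * (X + Y) - 21 * X) / 30) * ((12 * (j + 3) + 4) * (X + Y) ^ 2 +
        2 * (j + 3) * ((j + 3) * ((53 * (X + Y) - 21 * X) / 30)) * (X + Y) +
        (4 * (j + 3) ^ 2 + 12 * (j + 3) + 11) * X ^ 2) := by
    ring_nf
    positivity
  simp only [hY, one_pow, mul_one] at hbernstein
  linarith

theorem one_le_mul_sq_of_crossing (hk : 3 ≤ k) (hq : 0 < q)
    (hdegree : (6 * k + 9) * (1 - X ^ 2) ≤ 2 * k * (2 * k + 1 - q))
    (hfourth : (2 * k + 1) * (2 * k + 5) * (2 * k - 1 + X ^ 2) ≤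
      q * (12 * k + 4 + 2 * k * q + (4 * k ^ 2 + 12 * k + 11) * X ^ 2)) : 1 ≤ k * X ^ 2 := by
  by_contra! hlt
  have hq_le : q ≤ 2 * k - 2 := by
    have hmul := mul_le_mul_of_nonneg_left hdegree (show 0 ≤ k by linarith)
    nlinarith
  have hX_sq : (4 * k ^ 2 + 12 * k + 11) * X ^ 2 ≤ 4 * k + 16 := by nlinarith [sq_nonneg X]
  have hle : q * (12 * k + 4 + 2 * k * q + (4 * k ^ 2 + 12 * k + 11) * X ^ 2) ≤
      (2 * k - 2) * (12 * k + 4 + 2 * k * (2 * k - 2) + (4 * k + 16)) := by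
    gcongr
    linarith
  nlinarith [mul_nonneg (show 0 ≤ (2 * k + 1) * (2 * k + 5) by nlinarith) (sq_nonneg X)]

theorem crossing_tilt_le (hk : 3 ≤ k) (hX : X ∈ Ioo 0 1) (hkX : 1 ≤ k * X ^ 2)
    (hq : k * ((53 - 21 * X) / 30) ≤ q) :
    2 * (k + 1) ^ 2 * (1 + X) ^ 2 * (2 * k - q * X ^ 2 - X * (1 - X)) ≤
      (k + 2) * (X * (1 + X) ^ 2 + 2 * k * (1 + X) + k * q * X) *
        (q * X + (k + 1) * (1 - X)) := by
  obtain ⟨hX₀, hX₁⟩ := hX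
  have hcoef : 0 ≤ 53 - 21 * X := by linarith
  have hq₀ : 0 ≤ q := (by positivity : (0 : ℝ) ≤ _).trans hq
  suffices h : 2 * (k + 1) ^ 2 * (1 + X) ^ 2 *
        (2 * k - k * ((53 - 21 * X) / 30) * X ^ 2 - X * (1 - X)) ≤
      (k + 2) * (X * (1 + X) ^ 2 + 2 * k * (1 + X) + k * (k * ((53 - 21 * X) / 30)) * X) *
        (k * ((53 - 21 * X) / 30) * X + (k + 1) * (1 - X)) by
    refine le_trans ?_ (h.trans ?_) <;> gcongr
  obtain ⟨Y, hY⟩ : ∃ Y, X + Y = 1 := ⟨1 - X, by ring⟩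
  obtain ⟨j, hj⟩ : ∃ j, k * X = j + 17 / 10 := ⟨k * X - 17 / 10, by ring⟩
  have hY₀ : 0 < Y := by linarith
  have hj₀ : 0 ≤ j := by nlinarith
  refine le_of_mul_le_mul_left ?_ (pow_pos hX₀ 3)
  rw [← sub_nonneg]
  have hbernstein : 0 ≤ ((j + 17 / 10) * (X + Y) + 2 * X) *
        (X ^ 2 * (X + Y + X) ^ 2 + 2 * (j + 17 / 10) * (X + Y + X) * (X + Y) ^ 3 +
          (53 * (X + Y) - 21 * X) / 30 * (j + 17 / 10) ^ 2 * (X + Y) ^ 3) *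
        ((53 * (X + Y) - 21 * X) / 30 * X * (j + 17 / 10) +
          ((j + 17 / 10) * (X + Y) + X) * Y) -
      2 * ((j + 17 / 10) * (X + Y) + X) ^ 2 * (X + Y + X) ^ 2 * ((j + 17 / 10) *
        (2 * (X + Y) ^ 3 - (53 * (X + Y) - 21 * X) / 30 * X ^ 2) - X ^ 2 * Y) := by
    ring_nf
    positivity
  simp only [hY, ← hj] at hbernstein
  obtain rfl : Y = 1 - X := by linarith
  convert! hbernstein using 1
  ring

end CrossingInequality

section CrossingBound

variable {n k : ℕ} {w q X x₀ : ℝ} {F : ℕ → ℝ → ℝ}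

theorem chebDeriv_crossing_second
    (hcross : X * (1 - X ^ 2) * chebDeriv n (k + 1) X = 2 * k * chebDeriv n k X)
    (hq : 2 * k * q = 2 * k * (2 * k + 1) - ((n : ℝ) ^ 2 - k ^ 2) * (1 - X ^ 2)) :
    (1 - X ^ 2) ^ 2 * chebDeriv n (k + 2) X = 2 * k * q * chebDeriv n k X := by
  linear_combination (1 - X ^ 2) * chebDeriv_ode n k X + (2 * k + 1) * hcross -
    chebDeriv n k X * hq

theorem chebDeriv_crossing_fourth
    (hcross : X * (1 - X ^ 2) * chebDeriv n (k + 1) X = 2 * k * chebDeriv n k X)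
    (hq : 2 * k * q = 2 * k * (2 * k + 1) - ((n : ℝ) ^ 2 - k ^ 2) * (1 - X ^ 2)) :
    (1 - X ^ 2) ^ 4 * chebDeriv n (k + 4) X =
      2 * k * (q * (12 * k + 4 + 2 * k * q + (4 * k ^ 2 + 12 * k + 11) * X ^ 2) -
        (2 * k + 1) * (2 * k + 5) * (2 * k - 1 + X ^ 2)) * chebDeriv n k X := by
  have hsecond := chebDeriv_crossing_second hcross hq
  have hode₁ := chebDeriv_ode n (k + 1) X
  have hode₂ := chebDeriv_ode n (k + 2) X
  simp only [add_assoc, Nat.reduceAdd] at hode₁ hode₂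
  push_cast at hode₁ hode₂
  have hthird : X * (1 - X ^ 2) ^ 3 * chebDeriv n (k + 3) X = 2 * k * ((2 * k + 3) * X ^ 2 * q -
      ((n : ℝ) ^ 2 - (k + 1) ^ 2) * (1 - X ^ 2)) * chebDeriv n k X := by
    linear_combination X * (1 - X ^ 2) ^ 2 * hode₁ + (2 * k + 3) * X ^ 2 * hsecond -
      ((n : ℝ) ^ 2 - (k + 1) ^ 2) * (1 - X ^ 2) * hcross
  linear_combination (1 - X ^ 2) ^ 3 * hode₂ + (2 * k + 5) * hthird -
      ((n : ℝ) ^ 2 - (k + 2) ^ 2) * (1 - X ^ 2) * hsecond -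
      2 * k * chebDeriv n k X * (q + (2 * k + 5)) * hq

theorem tiltNum_div_tiltDen_of_crossing (hk : k ≠ 0) (hX : X ∈ Ioo 0 1)
    (hu : chebDeriv n k X ≠ 0) (hq₀ : 0 < q)
    (hcross : X * (1 - X ^ 2) * chebDeriv n (k + 1) X = 2 * k * chebDeriv n k X)
    (hsecond : (1 - X ^ 2) ^ 2 * chebDeriv n (k + 2) X = 2 * k * q * chebDeriv n k X) :
    tiltNum n k X / tiltDen n k X = chebDeriv n k X * (2 * k - q * X ^ 2 - X * (1 - X)) /
      (X * (q * X + (k + 1) * (1 - X))) := by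
  obtain ⟨hX₀, hX₁⟩ := hX
  have hX_compl : 0 < 1 - X := by linarith
  have hsq : 1 - X ^ 2 = (1 - X) * (1 + X) := by ring
  rw [hsq] at hcross hsecond
  have hu₁ : chebDeriv n (k + 1) X = 2 * k * chebDeriv n k X / (X * ((1 - X) * (1 + X))) := by
    rw [eq_div_iff (by positivity), ← hcross, mul_comm]
  have hu₂ : chebDeriv n (k + 2) X = 2 * k * q * chebDeriv n k X / ((1 - X) * (1 + X)) ^ 2 := by
    rw [eq_div_iff (by positivity), ← hsecond, mul_comm]
  have hden : tiltDen n k X = 2 * k * chebDeriv n k X * (q * X + (k + 1) * (1 - X)) /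
      (X * (1 - X) ^ 2 * (1 + X)) := by
    rw [tiltDen, hu₁, hu₂]
    field_simp
  have hnum : tiltNum n k X = 2 * k * chebDeriv n k X ^ 2 * (2 * k - q * X ^ 2 - X * (1 - X)) /
      (X ^ 2 * (1 - X) ^ 2 * (1 + X)) := by
    rw [tiltNum, hu₁, hu₂]
    field_simp
  rw [hden, hnum]
  field_simp

theorem le_chebDeriv_one_of_crossing (hw : IsGreatest {x | chebDeriv n (k + 1) x = 0} w)
    (hX₀ : 0 < X) (hX : X ∈ Ioo w 1)
    (hcross : X * (1 - X ^ 2) * chebDeriv n (k + 1) X = 2 * k * chebDeriv n k X)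
    (hsecond : (1 - X ^ 2) ^ 2 * chebDeriv n (k + 2) X = 2 * k * q * chebDeriv n k X) :
    chebDeriv n k X * (X * (1 + X) ^ 2 + 2 * k * (1 + X) + k * q * X) ≤
      chebDeriv n k 1 * (X * (1 + X) ^ 2) := by
  have htaylor := chebDeriv_taylor_two_le (m := n) (k := k) hX.2.le fun x hx =>
    chebDeriv_nonneg_of_largest_zero_le hw (hX.1.le.trans hx.1) (by omega)
  linear_combination mul_le_mul_of_nonneg_right htaylor (by positivity : 0 ≤ X * (1 + X) ^ 2) -
    (1 + X) * hcross - X / 2 * hsecond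

theorem mul_chebDeriv_one_le_criticalBound (hk : k + 3 ≤ n) :
    (k + 2) / (2 * (k + 1) ^ 2) * chebDeriv n k 1 ≤ criticalBound n k := by
  have hkn : (k : ℝ) + 3 ≤ n := by exact_mod_cast hk
  have hk₀ : (0 : ℝ) ≤ k := k.cast_nonneg
  refine mul_le_mul_of_nonneg_right ?_ (chebDeriv_one_pos (by omega)).le
  rw [div_mul_div_comm, div_le_div_iff₀ (by positivity) (by apply mul_pos <;> linarith)]
  nlinarith [mul_nonneg (mul_nonneg hk₀ (by linarith : 0 ≤ (k : ℝ) + 1)) (sub_nonneg.2 hkn)]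

theorem chebDeriv_pos_of_crossing (hk : k ≠ 0)
    (hw : IsGreatest {x | chebDeriv n (k + 1) x = 0} w) (hX₀ : 0 < X) (hX : X ∈ Ioo w 1)
    (hcross : X * (1 - X ^ 2) * chebDeriv n (k + 1) X = 2 * k * chebDeriv n k X) :
    0 < chebDeriv n k X := by
  have hz : 0 < 1 - X ^ 2 := by nlinarith [hX.2]
  have hu₁ := chebDeriv_pos_of_largest_zero_lt hw hX.1
  have : 0 < 2 * k * chebDeriv n k X := hcross ▸ by positivity
  exact pos_of_mul_pos_right this (by positivity)

theorem exists_crossing_curvature (hk₁ : k ≠ 0) (hk : k + 3 ≤ n)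
    (hw : IsGreatest {x | chebDeriv n (k + 1) x = 0} w) (hX₀ : 0 < X) (hX : X ∈ Ioo w 1)
    (hcross : X * (1 - X ^ 2) * chebDeriv n (k + 1) X = 2 * k * chebDeriv n k X) :
    ∃ q > 0, (1 - X ^ 2) ^ 2 * chebDeriv n (k + 2) X = 2 * k * q * chebDeriv n k X ∧
      (6 * k + 9) * (1 - X ^ 2) ≤ 2 * k * (2 * k + 1 - q) ∧
      (2 * k + 1) * (2 * k + 5) * (2 * k - 1 + X ^ 2) ≤
        q * (12 * k + 4 + 2 * k * q + (4 * k ^ 2 + 12 * k + 11) * X ^ 2) := by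
  have hkn : (k : ℝ) + 3 ≤ n := by exact_mod_cast hk
  have hz : 0 < 1 - X ^ 2 := by nlinarith [hX.2]
  have hu := chebDeriv_pos_of_crossing hk₁ hw hX₀ hX hcross
  have hu₂ := chebDeriv_succ_pos_of_largest_zero_le (by omega) hw hX.1.le
  have hu₄ := chebDeriv_nonneg_of_largest_zero_le hw hX.1.le (show k + 1 ≤ k + 4 by omega)
  obtain ⟨q, hq⟩ : ∃ q, 2 * k * q = 2 * k * (2 * k + 1) - ((n : ℝ) ^ 2 - k ^ 2) * (1 - X ^ 2) :=
    ⟨_, mul_div_cancel₀ _ (by positivity)⟩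
  have hsecond := chebDeriv_crossing_second hcross hq
  have hfourth := chebDeriv_crossing_fourth hcross hq
  refine ⟨q, ?_, hsecond, ?_, ?_⟩
  · have : 0 < 2 * k * q * chebDeriv n k X := hsecond ▸ by positivity
    exact pos_of_mul_pos_right (pos_of_mul_pos_left this hu.le) (by positivity)
  · have hN : 6 * k + 9 ≤ (n : ℝ) ^ 2 - k ^ 2 := by nlinarith
    linarith [mul_le_mul_of_nonneg_right hN hz.le]
  · rw [← sub_nonneg]
    refine nonneg_of_mul_nonneg_right (nonneg_of_mul_nonneg_left ?_ hu)
      (by positivity : (0 : ℝ) < 2 * k)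
    rw [← hfourth]
    positivity

theorem tiltNum_div_tiltDen_le_of_crossing (hk₁ : 3 ≤ k) (hk : k + 3 ≤ n)
    (hw : IsGreatest {x | chebDeriv n (k + 1) x = 0} w) (hX : X ∈ Ioo w 1)
    (hcross : X * (1 - X ^ 2) * chebDeriv n (k + 1) X = 2 * k * chebDeriv n k X) :
    tiltNum n k X / tiltDen n k X ≤ criticalBound n k := by
  have hX₀ : 0 < X := (largest_zero_mem_Ico (by omega) hw).1.trans_lt hX.1
  have hX_mem : X ∈ Ioo 0 1 := ⟨hX₀, hX.2⟩
  have hX_compl : 0 < 1 - X := sub_pos.2 hX.2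
  have hk₀ : (3 : ℝ) ≤ k := by exact_mod_cast hk₁
  have hu := chebDeriv_pos_of_crossing (by omega) hw hX₀ hX hcross
  obtain ⟨q, hq₀, hsecond, hdegree, hfourth⟩ :=
    exists_crossing_curvature (by omega) hk hw hX₀ hX hcross
  have hineq := crossing_tilt_le hk₀ hX_mem (one_le_mul_sq_of_crossing hk₀ hq₀ hdegree hfourth)
    (crossing_curvature_ge hk₀ hX_mem hq₀ hfourth)
  have htaylor := le_chebDeriv_one_of_crossing hw hX₀ hX hcross hsecond
  refine le_trans ?_ (mul_chebDeriv_one_le_criticalBound hk)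
  rw [tiltNum_div_tiltDen_of_crossing (by omega) hX_mem hu.ne' hq₀ hcross hsecond,
    div_mul_eq_mul_div, div_le_div_iff₀ (by positivity) (by positivity)]
  refine le_of_mul_le_mul_right ?_ (by positivity : 0 < (1 + X) ^ 2)
  have hleft := mul_le_mul_of_nonneg_left hineq hu.le
  have hright := mul_le_mul_of_nonneg_left htaylor
    (by positivity : 0 ≤ (k + 2) * (q * X + (k + 1) * (1 - X)))
  linarith

theorem Competitor.abs_le_criticalBound_of_three_le (hk₁ : 3 ≤ k) (hk : k + 3 ≤ n)
    (hw : IsGreatest {x | chebDeriv n (k + 1) x = 0} w)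
    (hF : Competitor n k (criticalRatio n k * sigmaN n) x₀ F) (hx₀ : x₀ ∈ Icc w 1) :
    |F k x₀| ≤ criticalBound n k := by
  obtain hle | ⟨X, hX, hx₀X, hcross⟩ :=
    hF.abs_le_criticalBound_or_exists_crossing (by omega) (by omega) hw hx₀
  · exact hle
  · exact hF.abs_le_criticalBound_of_tilt_le (by omega) (by omega) hw hx₀.1 ⟨hx₀X, hX.2.le⟩
      (tiltNum_div_tiltDen_le_of_crossing hk₁ hk hw hX hcross)

end CrossingBound

section DegreeAddTwo

variable {k : ℕ} {w s X x₀ : ℝ} {F : ℕ → ℝ → ℝ}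

theorem chebDeriv_add_two_succ (k : ℕ) (x : ℝ) :
    chebDeriv (k + 2 : ℕ) (k + 1) x = sigmaN (k + 2) * x := by
  have hode := chebDeriv_ode (k + 2) (k + 1) x
  rw [chebDeriv_eq_zero_of_lt (by omega), add_assoc, chebDeriv_self] at hode
  push_cast at hode ⊢
  refine mul_left_cancel₀ (by positivity : (2 * k + 3 : ℝ) ≠ 0) ?_
  linear_combination hode

theorem chebDeriv_add_two (k : ℕ) (x : ℝ) : chebDeriv (k + 2 : ℕ) k x =
    sigmaN (k + 2) * (2 * (k + 1) * x ^ 2 - 1) / (4 * (k + 1)) := by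
  have hode := chebDeriv_ode (k + 2) k x
  rw [chebDeriv_self, chebDeriv_add_two_succ] at hode
  rw [eq_div_iff (by positivity)]
  push_cast at hode ⊢
  linear_combination hode

theorem criticalBound_add_two (k : ℕ) :
    criticalBound (k + 2) k = sigmaN (k + 2) / (4 * (k + 1)) := by
  rw [criticalBound, chebDeriv_add_two]
  push_cast
  have : (k : ℝ) + 2 - 1 ≠ 0 := by ring_nf; positivity
  have : (k : ℝ) + 2 - 1 + k ≠ 0 := by ring_nf; positivity
  field_simp
  ring

theorem tiltDen_add_two (k : ℕ) (x : ℝ) :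
    tiltDen (k + 2) k x = sigmaN (k + 2) * (1 + (k + 2) * x) := by
  rw [tiltDen, chebDeriv_self, chebDeriv_add_two_succ]
  ring

theorem tiltNum_add_two (k : ℕ) (x : ℝ) : tiltNum (k + 2) k x =
    sigmaN (k + 2) ^ 2 * (2 * (k + 1) * x ^ 2 + 1 + 2 * x) / (4 * (k + 1)) := by
  rw [tiltNum, chebDeriv_self, chebDeriv_add_two_succ, chebDeriv_add_two]
  field_simp
  ring

theorem Competitor.abs_le_criticalBound_add_two (hk₁ : 1 ≤ k)
    (hw : IsGreatest {x | chebDeriv (k + 2 : ℕ) (k + 1) x = 0} w)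
    (hF : Competitor (k + 2) k (criticalRatio (k + 2) k * sigmaN (k + 2)) x₀ F)
    (hx₀ : x₀ ∈ Icc w 1) (hs : 1 + Real.cos (Real.pi / (k + 2 : ℕ)) ≤ 2 * s) (hs₁ : s ≤ 1)
    (hx₀s : s * (x₀ + 1) - 1 ≤ k / (2 * (k + 1)))
    (hη : 1 / (2 * ((k : ℝ) + 3)) ≤ s ^ (k + 2) * (2 * (k + 1) / (k ^ 2 + 4 * k + 2))) :
    |F k x₀| ≤ criticalBound (k + 2) k := by
  have hσ := sigmaN_pos (k + 2)
  have hw_zero : w = 0 := by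
    have hzero : chebDeriv (k + 2 : ℕ) (k + 1) w = 0 := hw.1
    rwa [chebDeriv_add_two_succ, mul_eq_zero, or_iff_right hσ.ne'] at hzero
  have hs₀ : 0 < s := by linarith [cos_pi_div_nonneg (show 2 ≤ k + 2 by omega)]
  refine hF.abs_le_criticalBound_of_dilation hk₁ le_rfl hw hx₀ hs hs₁
    (hw_zero.trans_le (by positivity)) hx₀s ?_ ?_
  · convert! hη using 1
    · rw [criticalRatio]
      push_cast
      ring
    · rw [tiltDen_add_two, chebDeriv_add_two_succ]
      push_cast
      field_simp
      ring
  · refine (mul_le_of_le_one_left ?_ (pow_le_one₀ hs₀.le hs₁)).trans_eq ?_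
    · rw [tiltNum_add_two, tiltDen_add_two]
      positivity
    · rw [tiltNum_add_two, tiltDen_add_two, criticalBound_add_two]
      field_simp
      ring

theorem crossing_add_two (hk₁ : k ≠ 0) (hcross : X * (1 - X ^ 2) *
      chebDeriv (k + 2 : ℕ) (k + 1) X = 2 * k * chebDeriv (k + 2 : ℕ) k X) :
    2 * (k + 1) * (X ^ 2 * (k - 1 + X ^ 2)) = k := by
  have hσ := sigmaN_pos (k + 2)
  rw [chebDeriv_add_two_succ, chebDeriv_add_two] at hcross
  field_simp at hcross
  linear_combination (-1 / 2) * hcross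

theorem crossing_add_two_le {k r X : ℝ} (hk : 1 < k) (hr : 0 ≤ r)
    (hX : 2 * (k + 1) * (X ^ 2 * (k - 1 + X ^ 2)) = k)
    (hle : k ≤ 2 * (k + 1) * (r ^ 2 * (k - 1 + r ^ 2))) : X ≤ r := by
  by_contra! hlt
  refine (hle.trans_lt ?_).ne' hX
  have : 0 < k - 1 := sub_pos.2 hk
  gcongr

theorem Competitor.abs_le_criticalBound_of_eq_add_two (hk : 2 ≤ k)
    (hw : IsGreatest {x | chebDeriv (k + 2 : ℕ) (k + 1) x = 0} w)
    (hF : Competitor (k + 2) k (criticalRatio (k + 2) k * sigmaN (k + 2)) x₀ F)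
    (hx₀ : x₀ ∈ Icc w 1) : |F k x₀| ≤ criticalBound (k + 2) k := by
  obtain hle | ⟨X, _, hx₀X, hcross⟩ :=
    hF.abs_le_criticalBound_or_exists_crossing (by omega) le_rfl hw hx₀
  · exact hle
  have hX_eq := crossing_add_two (by omega) hcross
  have hx₀_le {r : ℝ} (hr : 0 ≤ r) (hle : (k : ℝ) ≤ 2 * (k + 1) * (r ^ 2 * (k - 1 + r ^ 2))) :
      x₀ ≤ r := hx₀X.trans (crossing_add_two_le (by exact_mod_cast hk) hr hX_eq hle)
  obtain rfl | rfl | hk₄ : k = 2 ∨ k = 3 ∨ 4 ≤ k := by omega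
  · refine hF.abs_le_criticalBound_add_two (s := 7 / 8) (by omega) hw hx₀ ?_ (by norm_num) ?_
      (by norm_num)
    · norm_num [Real.cos_pi_div_four]
      nlinarith [Real.sq_sqrt (show (0 : ℝ) ≤ 2 by norm_num)]
    · have := hx₀_le (r := 13 / 25) (by norm_num) (by norm_num)
      norm_num
      linarith
  · refine hF.abs_le_criticalBound_add_two (s := 19 / 20) (by omega) hw hx₀ ?_ (by norm_num) ?_
      (by norm_num)
    · norm_num [Real.cos_pi_div_five]
      nlinarith [Real.sq_sqrt (show (0 : ℝ) ≤ 5 by norm_num)]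
    · have := hx₀_le (r := 21 / 50) (by norm_num) (by norm_num)
      norm_num
      linarith
  · have hk₀ : (4 : ℝ) ≤ k := by exact_mod_cast hk₄
    refine hF.abs_le_criticalBound_add_two (s := 1) (by omega) hw hx₀
      (by linarith [Real.cos_le_one (Real.pi / (k + 2 : ℕ))]) le_rfl ?_ ?_
    · rw [one_mul, add_sub_cancel_right]
      refine hx₀_le (by positivity) ?_
      calc (k : ℝ) ≤ k ^ 2 * (k - 1) / (2 * (k + 1)) := by
            rw [le_div_iff₀ (by positivity)]
            nlinarith
        _ = 2 * (k + 1) * ((k / (2 * (k + 1))) ^ 2 * (k - 1)) := by field_simp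
        _ ≤ _ := by
            gcongr
            exact le_add_of_nonneg_right (sq_nonneg _)
    · rw [one_pow, one_mul, div_le_div_iff₀ (by positivity) (by positivity)]
      nlinarith

end DegreeAddTwo

section CosPiDiv

variable {n k j : ℕ} {w x : ℝ}

theorem isGreatest_cos_pi_div (hn : 2 ≤ n) :
    IsGreatest {x | chebDeriv n 1 x = 0} (Real.cos (Real.pi / n)) := by
  have hn₀ : (2 : ℝ) ≤ n := by exact_mod_cast hn
  have hπ : Real.pi / n < Real.pi := div_lt_self Real.pi_pos (by linarith)
  have hπ₀ : 0 < Real.pi / n := div_pos Real.pi_pos (by linarith)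
  refine ⟨?_, fun x hx => ?_⟩
  · have hnode := sq_sub_one_mul_chebDeriv_one_node (m := n) (by omega) 1
    rw [Polynomial.Chebyshev.node, Nat.cast_one, one_mul, Real.cos_sq'] at hnode
    refine (mul_eq_zero.1 hnode).resolve_left ?_
    simpa using (Real.sin_pos_of_pos_of_lt_pi hπ₀ hπ).ne'
  · have hzero : chebDeriv n 1 x = 0 := hx
    have hxI := mem_Ioo_of_chebDeriv_eq_zero (by omega) hzero
    by_contra! hlt
    have hcos := Real.cos_arccos hxI.1.le hxI.2.le
    have hθ₀ : 0 < Real.arccos x := Real.arccos_pos.2 hxI.2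
    have hθ : Real.arccos x < Real.pi / n := by
      rw [← Real.arccos_cos hπ₀.le hπ.le]
      exact Real.arccos_lt_arccos (Real.neg_one_le_cos _) hlt hxI.2.le
    have hsin := Polynomial.Chebyshev.U_real_cos (Real.arccos x) (n - 1)
    rw [hcos] at hsin
    simp only [chebDeriv, Function.iterate_one, Polynomial.Chebyshev.T_derivative_eq_U, eval_mul]
      at hzero
    have hU : (Polynomial.Chebyshev.U ℝ (n - 1)).eval x = 0 :=
      (mul_eq_zero.1 hzero).resolve_left (by simpa using by omega)
    push_cast at hsin
    rw [hU, zero_mul, sub_add_cancel] at hsin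
    refine (Real.sin_pos_of_pos_of_lt_pi (by positivity) ?_).ne hsin
    rwa [lt_div_iff₀' (by linarith)] at hθ

theorem chebDeriv_pos_of_largest_zero_lt_of_le (hw : IsGreatest {x | chebDeriv n k x = 0} w)
    (hx : w < x) (hkj : k ≤ j) (hj : j ≤ n) : 0 < chebDeriv n j x := by
  induction j, hkj using Nat.le_induction with
  | base => exact chebDeriv_pos_of_largest_zero_lt hw hx
  | succ j hkj ih =>
    refine (chebDeriv_nonneg_of_largest_zero_le hw hx.le (by omega)).lt_of_ne' fun hzero => ?_
    have hxI := mem_Ioo_of_chebDeriv_eq_zero hj hzero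
    have hjn : (j : ℝ) + 1 ≤ n := by exact_mod_cast hj
    have hode := chebDeriv_ode n j x
    have hnext : 0 ≤ chebDeriv n (j + 2) x :=
      chebDeriv_nonneg_of_largest_zero_le hw hx.le (by omega)
    have hpos := ih (by omega)
    have : 0 < 1 - x ^ 2 := by nlinarith [hxI.1, hxI.2]
    have : 0 < (n : ℝ) ^ 2 - j ^ 2 := by nlinarith [Nat.cast_nonneg (α := ℝ) j]
    rw [hzero, mul_zero, zero_sub] at hode
    nlinarith [mul_pos this hpos]

theorem largest_zero_le_cos_pi_div (hk : k + 1 ≤ n) (hn : 2 ≤ n)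
    (hw : IsGreatest {x | chebDeriv n (k + 1) x = 0} w) : w ≤ Real.cos (Real.pi / n) := by
  by_contra! hlt
  exact (chebDeriv_pos_of_largest_zero_lt_of_le (isGreatest_cos_pi_div hn) hlt (by omega) hk).ne'
    hw.1

end CosPiDiv

section FirstNode

variable {n k : ℕ} {w x₀ z : ℝ} {F : ℕ → ℝ → ℝ}

theorem half_le_cos_pi_div (hn : 3 ≤ n) : 1 / 2 ≤ Real.cos (Real.pi / n) := by
  have hn' : (3 : ℝ) ≤ n := by exact_mod_cast hn
  have hπ := Real.pi_pos
  rw [← Real.cos_pi_div_three]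
  exact Real.cos_le_cos_of_nonneg_of_le_pi (by positivity) (by linarith) (by gcongr)

theorem cos_pi_div_lt_one (hn : 2 ≤ n) : Real.cos (Real.pi / n) < 1 :=
  (largest_zero_mem_Ico (by omega) (isGreatest_cos_pi_div hn)).2

theorem sq_mul_one_sub_cos_pi_div_le (hn : n ≠ 0) :
    n ^ 2 * (1 - Real.cos (Real.pi / n)) ≤ 987 / 200 := by
  have hcos := Real.one_sub_sq_div_two_le_cos (x := Real.pi / n)
  have hπ := Real.pi_lt_d4
  calc (n : ℝ) ^ 2 * (1 - Real.cos (Real.pi / n)) ≤ n ^ 2 * ((Real.pi / n) ^ 2 / 2) := by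
        gcongr
        linarith
    _ = Real.pi ^ 2 / 2 := by field_simp
    _ ≤ 987 / 200 := by nlinarith [Real.pi_pos]

theorem one_sub_mul_le_half_pow (n : ℕ) (hz : 0 ≤ z) :
    1 - n * (1 - z) / 2 ≤ ((1 + z) / 2) ^ n := by
  convert! one_add_mul_le_pow (a := -(1 - z) / 2) (by linarith) n using 1 <;> ring

/- The dilation that moves the largest critical point `cos (π / n)` of `T_n` to `1` moves `1` to
`cos (π / n)`. -/
theorem Competitor.abs_le_criticalBound_of_first_node (hk₁ : 1 ≤ k) (hk : k + 2 ≤ n)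
    (hw : IsGreatest {x | chebDeriv n (k + 1) x = 0} w)
    (hF : Competitor n k (criticalRatio n k * sigmaN n) x₀ F) (hx₀ : x₀ ∈ Icc w 1)
    (hz : z = Real.cos (Real.pi / n))
    (hη : criticalRatio n k ≤
      ((1 + z) / 2) ^ n * (1 - n * (chebDeriv n (k + 1) z / tiltDen n k z)))
    (hV : ((1 + z) / 2) ^ k * (tiltNum n k z / tiltDen n k z) ≤ criticalBound n k) :
    |F k x₀| ≤ criticalBound n k := by
  have hz₀ : 0 ≤ z := hz ▸ cos_pi_div_nonneg (by omega)
  have hz₁ : z ≤ 1 := hz ▸ Real.cos_le_one _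
  exact hF.abs_le_criticalBound_of_dilation hk₁ hk hw hx₀ (by linarith) (by linarith)
    (hz ▸ largest_zero_le_cos_pi_div (by omega) (by omega) hw) (by nlinarith [hx₀.2]) hη hV

theorem chebDeriv_zero_cos_pi_div (hn : n ≠ 0) : chebDeriv n 0 (Real.cos (Real.pi / n)) = -1 := by
  simpa [Polynomial.Chebyshev.node] using chebDeriv_zero_node (m := n) (l := 1) (by omega)

theorem chebDeriv_two_of_min (hz : z ∈ Ioo (-1) 1) (hmin : chebDeriv n 0 z = -1)
    (hcrit : chebDeriv n 1 z = 0) : chebDeriv n 2 z = n ^ 2 / (1 - z ^ 2) := by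
  have hg : 0 < 1 - z ^ 2 := by nlinarith [hz.1, hz.2]
  have hode := chebDeriv_ode n 0 z
  rw [zero_add, zero_add, hmin, hcrit] at hode
  rw [eq_div_iff hg.ne']
  push_cast at hode
  linear_combination hode

theorem chebDeriv_three_of_min (hz : z ∈ Ioo (-1) 1) (hmin : chebDeriv n 0 z = -1)
    (hcrit : chebDeriv n 1 z = 0) : chebDeriv n 3 z = 3 * z * n ^ 2 / (1 - z ^ 2) ^ 2 := by
  have hg : 0 < 1 - z ^ 2 := by nlinarith [hz.1, hz.2]
  have hode := chebDeriv_ode n 1 z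
  simp only [Nat.reduceAdd, chebDeriv_two_of_min hz hmin hcrit, hcrit] at hode
  field_simp at hode ⊢
  push_cast at hode
  linear_combination hode

theorem chebDeriv_four_of_min (hz : z ∈ Ioo (-1) 1) (hmin : chebDeriv n 0 z = -1)
    (hcrit : chebDeriv n 1 z = 0) : chebDeriv n 4 z =
      (15 * z ^ 2 - (n ^ 2 - 4) * (1 - z ^ 2)) * n ^ 2 / (1 - z ^ 2) ^ 3 := by
  have hg : 0 < 1 - z ^ 2 := by nlinarith [hz.1, hz.2]
  have hode := chebDeriv_ode n 2 z
  simp only [Nat.reduceAdd, chebDeriv_two_of_min hz hmin hcrit,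
    chebDeriv_three_of_min hz hmin hcrit] at hode
  field_simp at hode ⊢
  push_cast at hode
  linear_combination hode

end FirstNode

section FirstDerivative

variable {n : ℕ} {w x₀ z : ℝ} {F : ℕ → ℝ → ℝ}

theorem chebDeriv_one_one (n : ℕ) : chebDeriv n 1 1 = n ^ 2 := by
  simpa [chebDeriv_zero_one] using chebDeriv_one_rec n 0

theorem criticalBound_one (hn : n ≠ 0) : criticalBound n 1 = n * (n - 1) / 2 := by
  rw [criticalBound, chebDeriv_one_one, Nat.cast_one, sub_add_cancel]
  field_simp
  ring

theorem tiltDen_one_of_min (hz : z ∈ Ioo (-1) 1) (hmin : chebDeriv n 0 z = -1)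
    (hcrit : chebDeriv n 1 z = 0) :
    tiltDen n 1 z = n ^ 2 * (1 + z) * (2 + z) / (1 - z ^ 2) ^ 2 := by
  have hg : 0 < 1 - z ^ 2 := by nlinarith [hz.1, hz.2]
  rw [tiltDen, chebDeriv_three_of_min hz hmin hcrit, chebDeriv_two_of_min hz hmin hcrit]
  field_simp
  push_cast
  ring

theorem tiltNum_one_of_min (hz : z ∈ Ioo (-1) 1) (hmin : chebDeriv n 0 z = -1)
    (hcrit : chebDeriv n 1 z = 0) : tiltNum n 1 z = n ^ 4 * (1 + z) / (1 - z ^ 2) ^ 2 := by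
  rw [tiltNum, hcrit, chebDeriv_two_of_min hz hmin hcrit, div_pow]
  ring

theorem criticalRatio_one_le (hn : 3 ≤ n) (hz : z = Real.cos (Real.pi / n)) :
    criticalRatio n 1 ≤ ((1 + z) / 2) ^ n * (1 - n * ((1 - z) / (2 + z))) := by
  have hz₀ : 1 / 2 ≤ z := hz ▸ half_le_cos_pi_div hn
  have hz₂ : 0 < 2 + z := by linarith
  have hsq : n ^ 2 * (1 - z) ≤ 987 / 200 := hz ▸ sq_mul_one_sub_cos_pi_div_le (by omega)
  have hpow := one_sub_mul_le_half_pow n (by linarith : 0 ≤ z)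
  have hmul {a b : ℝ} (ha : a ≤ ((1 + z) / 2) ^ n) (hb₀ : 0 ≤ b)
      (hb : n * ((1 - z) / (2 + z)) ≤ 1 - b) :
      a * b ≤ ((1 + z) / 2) ^ n * (1 - n * ((1 - z) / (2 + z))) := by
    gcongr
    linarith
  obtain rfl | rfl | hn₅ : n = 3 ∨ n = 4 ∨ 5 ≤ n := by omega
  · have : z = 1 / 2 := by rw [hz, ← Real.cos_pi_div_three]; norm_num
    rw [this]
    norm_num [criticalRatio]
  · push_cast at hsq hpow
    refine le_trans ?_ (hmul (a := 19 / 50) (b := 27 / 50) (by linarith) (by norm_num) ?_)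
    · norm_num [criticalRatio]
    · rw [← mul_div_assoc, div_le_iff₀ hz₂]
      push_cast
      linarith
  · have hn₅' : (5 : ℝ) ≤ n := by exact_mod_cast hn₅
    have hnz : n * (1 - z) ≤ 987 / 1000 := by nlinarith
    refine le_trans ?_ (hmul (a := 1 / 2) (b := 16 / 25) (by linarith) (by norm_num) ?_)
    · rw [criticalRatio, div_le_iff₀ (by push_cast; linarith)]
      push_cast
      linarith
    · rw [← mul_div_assoc, div_le_iff₀ hz₂]
      nlinarith

theorem Competitor.abs_le_criticalBound_of_eq_one (hn : 3 ≤ n)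
    (hw : IsGreatest {x | chebDeriv n (1 + 1) x = 0} w)
    (hF : Competitor n 1 (criticalRatio n 1 * sigmaN n) x₀ F) (hx₀ : x₀ ∈ Icc w 1) :
    |F 1 x₀| ≤ criticalBound n 1 := by
  obtain ⟨z, hz⟩ : ∃ z, z = Real.cos (Real.pi / n) := ⟨_, rfl⟩
  have hz₀ : 1 / 2 ≤ z := hz ▸ half_le_cos_pi_div hn
  have hz₁ : z < 1 := hz ▸ cos_pi_div_lt_one (by omega)
  have hzI : z ∈ Ioo (-1) 1 := ⟨by linarith, hz₁⟩
  have hmin : chebDeriv n 0 z = -1 := hz ▸ chebDeriv_zero_cos_pi_div (by omega)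
  have hcrit : chebDeriv n 1 z = 0 := hz ▸ (isGreatest_cos_pi_div (by omega)).1
  have hg : 1 - z ^ 2 ≠ 0 := by nlinarith
  have hn₀ : (3 : ℝ) ≤ n := by exact_mod_cast hn
  refine hF.abs_le_criticalBound_of_first_node le_rfl hn hw hx₀ hz ?_ ?_
  · convert! criticalRatio_one_le hn hz using 4
    simp only [Nat.reduceAdd]
    rw [chebDeriv_two_of_min hzI hmin hcrit, tiltDen_one_of_min hzI hmin hcrit]
    field_simp
    ring
  · rw [tiltNum_one_of_min hzI hmin hcrit, tiltDen_one_of_min hzI hmin hcrit,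
      criticalBound_one (by omega)]
    have hratio : (n : ℝ) ^ 4 * (1 + z) / (1 - z ^ 2) ^ 2 /
        (n ^ 2 * (1 + z) * (2 + z) / (1 - z ^ 2) ^ 2) = n ^ 2 / (2 + z) := by
      field_simp
    rw [hratio, pow_one, div_mul_div_comm, div_le_div_iff₀ (by positivity) two_pos]
    nlinarith

end FirstDerivative

section SecondDerivative

variable {n : ℕ} {w x₀ z : ℝ} {F : ℕ → ℝ → ℝ}

/-- Up to an explicit positive factor, the value of `tiltDen n 2` at a point `z` of `(-1,1)` with
`T_n(z) = -1` and `T_n'(z) = 0`. -/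
noncomputable def tiltFactor (n : ℕ) (z : ℝ) : ℝ := (n ^ 2 + 2) * z ^ 2 + 9 * z - (n ^ 2 - 4)

theorem criticalBound_two (hn : n ≠ 0) : criticalBound n 2 = n ^ 2 * (n - 1) ^ 2 / 9 := by
  have hrec := chebDeriv_one_rec n 1
  rw [chebDeriv_one_one] at hrec
  have htwo : chebDeriv n 2 1 = n ^ 2 * ((n - 1) * (n + 1)) / 3 := by
    push_cast at hrec
    linear_combination hrec / 3
  rw [criticalBound, htwo, Nat.cast_ofNat, show (n : ℝ) - 1 + 2 = n + 1 by ring]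
  field_simp
  ring

theorem tiltDen_two_of_min (hz : z ∈ Ioo (-1) 1) (hmin : chebDeriv n 0 z = -1)
    (hcrit : chebDeriv n 1 z = 0) :
    tiltDen n 2 z = n ^ 2 * (1 + z) * tiltFactor n z / (1 - z ^ 2) ^ 3 := by
  have hg : 0 < 1 - z ^ 2 := by nlinarith [hz.1, hz.2]
  rw [tiltDen, chebDeriv_four_of_min hz hmin hcrit, chebDeriv_three_of_min hz hmin hcrit,
    tiltFactor]
  field_simp
  push_cast
  ring

theorem tiltNum_two_of_min (hz : z ∈ Ioo (-1) 1) (hmin : chebDeriv n 0 z = -1)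
    (hcrit : chebDeriv n 1 z = 0) : tiltNum n 2 z =
      n ^ 4 * (1 + z) ^ 2 * ((n ^ 2 - 1) * (1 - z) - 3) / (1 - z ^ 2) ^ 4 := by
  have hg : 0 < 1 - z ^ 2 := by nlinarith [hz.1, hz.2]
  rw [tiltNum, chebDeriv_four_of_min hz hmin hcrit, chebDeriv_three_of_min hz hmin hcrit,
    chebDeriv_two_of_min hz hmin hcrit]
  field_simp
  ring

theorem tiltFactor_eq (n : ℕ) (z : ℝ) : tiltFactor n z =
    15 - 2 * (n ^ 2 * (1 - z)) - (1 - z) * (13 - n ^ 2 * (1 - z)) + 2 * (1 - z) ^ 2 := by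
  rw [tiltFactor]
  ring

theorem tiltFactor_ge (hn : 5 ≤ n) (hz : z ≤ 1) (hsq : n ^ 2 * (1 - z) ≤ 987 / 200) :
    7 / 2 ≤ tiltFactor n z := by
  have hn₂ : (5 : ℝ) ^ 2 ≤ n ^ 2 := by gcongr; exact_mod_cast hn
  rw [tiltFactor_eq]
  nlinarith [mul_nonneg (sub_nonneg.2 hz) (by linarith : 0 ≤ 987 / 200 - n ^ 2 * (1 - z))]

theorem mul_le_tiltFactor_of_seven_le (hn : 7 ≤ n) (hz : z ≤ 1) (hsq : n ^ 2 * (1 - z) ≤ 5) :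
    9 * (1 + z) ^ 2 * ((n ^ 2 - 1) * (1 - z) - 3) ≤ 4 * (n - 1) ^ 2 * (1 - z) * tiltFactor n z := by
  obtain ⟨j, rfl⟩ := Nat.exists_eq_add_of_le' hn
  obtain ⟨X, hX⟩ : ∃ X : ℝ, X = ((j : ℝ) + 7) ^ 2 * (1 - z) / 5 := ⟨_, rfl⟩
  obtain ⟨Y, hY⟩ : ∃ Y, X + Y = 1 := ⟨1 - X, by ring⟩
  push_cast at hsq ⊢
  have hX₀ : 0 ≤ X := hX ▸ div_nonneg (mul_nonneg (sq_nonneg _) (by linarith)) (by norm_num)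
  have hY₀ : 0 ≤ Y := by linarith
  -- The Bernstein coefficients in `X` have nonnegative coefficients as polynomials in `j`.
  have hbernstein : 0 ≤ 4 * (j + 7 - 1) ^ 2 * (5 * X) * (15 * (j + 7) ^ 4 * (X + Y) ^ 2 -
        (2 * (j + 7) ^ 2 + 13) * (j + 7) ^ 2 * (5 * X) * (X + Y) +
          ((j + 7) ^ 2 + 2) * (5 * X) ^ 2) -
      9 * (2 * (j + 7) ^ 2 * (X + Y) - 5 * X) ^ 2 *
        (((j + 7) ^ 2 - 1) * (5 * X) - 3 * (j + 7) ^ 2 * (X + Y)) := by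
    ring_nf
    positivity
  simp only [hY, one_pow, mul_one] at hbernstein
  refine le_of_mul_le_mul_left ?_ (by positivity : 0 < ((j : ℝ) + 7) ^ 6)
  rw [hX] at hbernstein
  rw [tiltFactor]
  push_cast
  linarith

theorem mul_le_tiltFactor (hn : 5 ≤ n) (hz : z = Real.cos (Real.pi / n)) :
    9 * (1 + z) ^ 2 * ((n ^ 2 - 1) * (1 - z) - 3) ≤ 4 * (n - 1) ^ 2 * (1 - z) * tiltFactor n z := by
  have hz₁ : z < 1 := hz ▸ cos_pi_div_lt_one (by omega)
  obtain rfl | rfl | hn₇ : n = 5 ∨ n = 6 ∨ 7 ≤ n := by omega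
  · have hz₀ : 809 / 1000 ≤ z := by
      have : 2236 / 1000 ≤ Real.sqrt 5 := Real.le_sqrt_of_sq_le (by norm_num)
      rw [hz, Nat.cast_ofNat, Real.cos_pi_div_five]
      linarith
    rw [tiltFactor]
    norm_num
    nlinarith [mul_nonneg (sub_nonneg.2 hz₀) (sub_nonneg.2 hz₁.le)]
  · have hz₀ : 866 / 1000 ≤ z := by
      have : 1732 / 1000 ≤ Real.sqrt 3 := Real.le_sqrt_of_sq_le (by norm_num)
      rw [hz, Nat.cast_ofNat, Real.cos_pi_div_six]
      linarith
    rw [tiltFactor]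
    norm_num
    nlinarith [mul_nonneg (sub_nonneg.2 hz₀) (sub_nonneg.2 hz₁.le)]
  · exact mul_le_tiltFactor_of_seven_le hn₇ hz₁.le
      ((hz ▸ sq_mul_one_sub_cos_pi_div_le (by omega)).trans (by norm_num))

theorem criticalRatio_two_le (hn : 5 ≤ n) (hz : z = Real.cos (Real.pi / n)) :
    criticalRatio n 2 ≤ ((1 + z) / 2) ^ n * (1 - n * (3 * z * (1 - z) / tiltFactor n z)) := by
  have hz₀ : 1 / 2 ≤ z := hz ▸ half_le_cos_pi_div (by omega)
  have hz₁ : 0 ≤ 1 - z := sub_nonneg.2 (hz ▸ Real.cos_le_one _)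
  have hsq : n ^ 2 * (1 - z) ≤ 987 / 200 := hz ▸ sq_mul_one_sub_cos_pi_div_le (by omega)
  have hpow := one_sub_mul_le_half_pow n (by linarith : 0 ≤ z)
  have hD := tiltFactor_ge hn (by linarith) hsq
  have hmul {a b : ℝ} (ha : a ≤ ((1 + z) / 2) ^ n) (hb₀ : 0 ≤ b)
      (hb : n * (3 * z * (1 - z) / tiltFactor n z) ≤ 1 - b) :
      a * b ≤ ((1 + z) / 2) ^ n * (1 - n * (3 * z * (1 - z) / tiltFactor n z)) := by
    gcongr
    linarith
  have hn₅ : (5 : ℝ) ≤ n := by exact_mod_cast hn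
  obtain rfl | hn₆ : n = 5 ∨ 6 ≤ n := by omega
  · push_cast at hsq hpow
    refine le_trans ?_ (hmul (a := 1 / 2) (b := 3 / 10) (by linarith) (by norm_num) ?_)
    · norm_num [criticalRatio]
    · rw [← mul_div_assoc, div_le_iff₀ (by linarith)]
      push_cast
      nlinarith
  · have hn₆' : (6 : ℝ) ≤ n := by exact_mod_cast hn₆
    have hnz : n * (1 - z) ≤ 329 / 400 := by nlinarith
    have hz₂ : 1 - z ≤ 329 / 2400 := by nlinarith
    have hD₄ : 4 ≤ tiltFactor n z := by
      rw [tiltFactor_eq]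
      nlinarith [mul_nonneg hz₁ (by linarith : 0 ≤ 987 / 200 - n ^ 2 * (1 - z))]
    refine le_trans ?_ (hmul (a := 23 / 40) (b := 9 / 20) (by linarith) (by norm_num) ?_)
    · rw [criticalRatio, div_le_iff₀ (by push_cast; linarith)]
      push_cast
      linarith
    · rw [← mul_div_assoc, div_le_iff₀ (by linarith)]
      nlinarith

theorem Competitor.abs_le_criticalBound_of_eq_two (hn : 5 ≤ n)
    (hw : IsGreatest {x | chebDeriv n (2 + 1) x = 0} w)
    (hF : Competitor n 2 (criticalRatio n 2 * sigmaN n) x₀ F) (hx₀ : x₀ ∈ Icc w 1) :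
    |F 2 x₀| ≤ criticalBound n 2 := by
  obtain ⟨z, hz⟩ : ∃ z, z = Real.cos (Real.pi / n) := ⟨_, rfl⟩
  have hz₀ : 1 / 2 ≤ z := hz ▸ half_le_cos_pi_div (by omega)
  have hz₁ : z < 1 := hz ▸ cos_pi_div_lt_one (by omega)
  have hzI : z ∈ Ioo (-1) 1 := ⟨by linarith, hz₁⟩
  have hmin : chebDeriv n 0 z = -1 := hz ▸ chebDeriv_zero_cos_pi_div (by omega)
  have hcrit : chebDeriv n 1 z = 0 := hz ▸ (isGreatest_cos_pi_div (by omega)).1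
  have hsq : n ^ 2 * (1 - z) ≤ 987 / 200 := hz ▸ sq_mul_one_sub_cos_pi_div_le (by omega)
  have hD : 0 < tiltFactor n z := by linarith [tiltFactor_ge hn hz₁.le hsq]
  have hg : 1 - z ^ 2 = (1 - z) * (1 + z) := by ring
  have hz_sub : 0 < 1 - z := sub_pos.2 hz₁
  refine hF.abs_le_criticalBound_of_first_node one_le_two (by omega) hw hx₀ hz ?_ ?_
  · convert! criticalRatio_two_le hn hz using 4
    simp only [Nat.reduceAdd]
    rw [chebDeriv_three_of_min hzI hmin hcrit, tiltDen_two_of_min hzI hmin hcrit, hg]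
    field_simp
  · have hratio : tiltNum n 2 z / tiltDen n 2 z =
        n ^ 2 * ((n ^ 2 - 1) * (1 - z) - 3) / ((1 - z) * tiltFactor n z) := by
      rw [tiltNum_two_of_min hzI hmin hcrit, tiltDen_two_of_min hzI hmin hcrit, hg]
      field_simp
    rw [hratio, criticalBound_two (by omega), div_pow, div_mul_div_comm,
      div_le_div_iff₀ (by positivity) (by norm_num)]
    have := mul_le_mul_of_nonneg_left (mul_le_tiltFactor hn hz) (sq_nonneg (n : ℝ))
    linarith

end SecondDerivative

section UpperBound

variable {n k : ℕ} {w x₀ σ B : ℝ} {f : ℝ → ℝ} {F : ℕ → ℝ → ℝ}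

theorem Competitor.abs_le_criticalBound (hk₁ : 1 ≤ k) (hk : k + 2 ≤ n)
    (hw : IsGreatest {x | chebDeriv n (k + 1) x = 0} w)
    (hF : Competitor n k (criticalRatio n k * sigmaN n) x₀ F) (hx₀ : x₀ ∈ Icc w 1) :
    |F k x₀| ≤ criticalBound n k := by
  obtain rfl | hk₂ := hk₁.eq_or_lt
  · exact Competitor.abs_le_criticalBound_of_eq_one hk hw hF hx₀
  obtain rfl | hn := hk.eq_or_lt
  · exact Competitor.abs_le_criticalBound_of_eq_add_two hk₂ hw hF hx₀
  obtain rfl | hk₃ := Nat.succ_le_iff.2 hk₂ |>.eq_or_lt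
  · exact Competitor.abs_le_criticalBound_of_eq_two hn hw hF hx₀
  · exact Competitor.abs_le_criticalBound_of_three_le hk₃ hn hw hF hx₀

theorem criticalBound_le_chebDeriv_one (hn : 2 ≤ n) (hk : k + 1 ≤ n) :
    criticalBound n k ≤ chebDeriv ((n : ℤ) - 1) k 1 := by
  obtain ⟨m, rfl⟩ : ∃ m, n = m + 1 := ⟨n - 1, by omega⟩
  have hkm : (k : ℝ) + 1 ≤ m + 1 := by exact_mod_cast hk
  have hmul := criticalBound_succ_mul (k := k) (show m ≠ 0 by omega)
  have hcoef : (m : ℝ) + 1 ≤ (k + 1) * ((m : ℝ) + 1 - k) := by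
    nlinarith [Nat.cast_nonneg (α := ℝ) k]
  have hpos := chebDeriv_one_pos (show k ≤ m by omega)
  push_cast
  rw [add_sub_cancel_right]
  refine le_of_mul_le_mul_right ?_ (hcoef.trans_lt' m.cast_add_one_pos)
  rw [hmul, mul_comm]
  exact mul_le_mul_of_nonneg_left hcoef hpos.le

/- Dilating by `ρ` with `ρ ^ n = S / σ` towards `x₀` turns the bound `σ` on the `n`-th derivative
into `S`, at the cost of the factor `ρ ^ k` in the `k`-th derivative at `x₀`. -/
theorem Competitor.abs_le_mul_rpow {S : ℝ} (hn : n ≠ 0) (hS : 0 < S) (hSσ : S ≤ σ)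
    (hx₀ : x₀ ∈ Icc (-1) 1) (hB : ∀ G, Competitor n k S x₀ G → |G k x₀| ≤ B)
    (hF : Competitor n k σ x₀ F) : |F k x₀| ≤ B * (σ / S) ^ ((k : ℝ) / n) := by
  have hσ : 0 < σ := hS.trans_le hSσ
  obtain ⟨ρ, hρ⟩ : ∃ ρ, ρ = (S / σ) ^ ((n : ℝ)⁻¹) := ⟨_, rfl⟩
  have hρ₀ : 0 < ρ := hρ ▸ Real.rpow_pos_of_pos (div_pos hS hσ) _
  have hρ₁ : ρ ≤ 1 :=
    hρ ▸ Real.rpow_le_one (div_pos hS hσ).le ((div_le_one hσ).2 hSσ) (by positivity)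
  have hρn : ρ ^ n * σ = S := by
    rw [hρ, Real.rpow_inv_natCast_pow (div_pos hS hσ).le hn, div_mul_cancel₀ _ hσ.ne']
  have hρk : (σ / S) ^ ((k : ℝ) / n) = (ρ ^ k)⁻¹ := by
    rw [hρ, ← Real.rpow_mul_natCast (div_pos hS hσ).le, ← Real.inv_rpow (div_pos hS hσ).le,
      inv_div, inv_mul_eq_div]
  have hdil := hB _ (hρn ▸ hF.dilate hx₀ ⟨hρ₀.le, hρ₁⟩)
  rw [abs_mul, abs_of_pos (pow_pos hρ₀ k), show ρ * x₀ + (1 - ρ) * x₀ = x₀ by ring] at hdil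
  rwa [hρk, ← div_eq_mul_inv, le_div_iff₀' (pow_pos hρ₀ k)]

theorem memW.competitor (hf : memW n σ f)
    (hf₀ : iteratedDerivWithin (k + 1) f (Icc (-1) 1) x₀ = 0) :
    Competitor n k σ x₀ (fun i => iteratedDerivWithin i f (Icc (-1) 1)) where
  tower i hi x hx := by
    simpa only [iteratedDerivWithin_succ] using (hf.1 i hi x hx).hasDerivWithinAt
  abs_le_one := by simpa only [iteratedDerivWithin_zero] using hf.2.1
  abs_deriv_le := hf.2.2
  deriv_eq_zero := hf₀

theorem mstar_le (hσ : 0 ≤ σ) (hB : ∀ F, Competitor n k σ x₀ F → |F k x₀| ≤ B) :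
    mstar n k x₀ σ ≤ B := by
  have hzero (i : ℕ) : iteratedDerivWithin i (0 : ℝ → ℝ) (Icc (-1 : ℝ) 1) = 0 :=
    funext fun x => iteratedDerivWithin_const_zero
  refine csSup_le ⟨0, 0, ⟨?_, ?_, ?_⟩, ?_, ?_⟩ ?_
  · intro i _
    rw [hzero]
    exact differentiableOn_const 0
  · simp
  · simpa [hzero] using fun _ _ _ => hσ
  · simp
  · simp
  · rintro _ ⟨f, hf, hf₀, rfl⟩
    exact hB _ (hf.competitor hf₀)

theorem mstar_upper_bound_general (hk₁ : 1 ≤ k) (hk : k + 2 ≤ n) (hσ : 0 ≤ σ)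
    (hw : IsGreatest {x | chebDeriv n (k + 1) x = 0} w) (hx₀ : x₀ ∈ Icc w 1) :
    (σ / sigmaN n ≤ criticalRatio n k → mstar n k x₀ σ ≤ chebDeriv ((n : ℤ) - 1) k 1) ∧
    (criticalRatio n k ≤ σ / sigmaN n → mstar n k x₀ σ ≤
      criticalBound n k * (σ / (criticalRatio n k * sigmaN n)) ^ ((k : ℝ) / n)) := by
  have hcritical (G) (hG : Competitor n k (criticalRatio n k * sigmaN n) x₀ G) :
      |G k x₀| ≤ criticalBound n k := hG.abs_le_criticalBound hk₁ hk hw hx₀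
  have hw₀ := (largest_zero_mem_Ico (by omega) hw).1
  refine ⟨fun hle => mstar_le hσ fun F hF => ?_, fun hge => mstar_le hσ fun F hF => ?_⟩
  · exact (hcritical F (hF.mono ((div_le_iff₀ (sigmaN_pos n)).1 hle))).trans
      (criticalBound_le_chebDeriv_one (by omega) (by omega))
  · exact hF.abs_le_mul_rpow (by omega) (mul_pos (criticalRatio_pos hk) (sigmaN_pos n))
      ((le_div_iff₀ (sigmaN_pos n)).1 hge) ⟨by linarith [hx₀.1], hx₀.2⟩ hcritical

end UpperBound

/-- upper bound `m_k^*(x₀,σ) ≤ A*_{n,k}(σ)` for `x₀ ∈ [ω_k, 1]`. -/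
theorem mstar_upper_bound (n k : ℕ) (σ : ℝ) (hn : 3 ≤ n) (hk1 : 1 ≤ k) (hk2 : k ≤ n - 2)
    (hσ0 : 0 ≤ σ) (hσn : σ ≤ sigmaN n)
    (ωk : ℝ) (hω : IsGreatest {x : ℝ | chebDeriv n (k+1) x = 0} ωk) :
    ∀ x₀ ∈ Icc ωk (1:ℝ),
      (σ / sigmaN n ≤ ((n:ℝ) - ((k:ℝ) + 1)) / (2 * (2 * (n:ℝ) - ((k:ℝ) + 1))) →
        mstar n k x₀ σ ≤ chebDeriv ((n:ℤ) - 1) k 1) ∧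
      (((n:ℝ) - ((k:ℝ) + 1)) / (2 * (2 * (n:ℝ) - ((k:ℝ) + 1))) ≤ σ / sigmaN n →
        mstar n k x₀ σ ≤
          (1 / ((k:ℝ) + 1)) * (((n:ℝ) - 1) / ((n:ℝ) - 1 + (k:ℝ))) * chebDeriv n k 1 *
            (σ / ((((n:ℝ) - ((k:ℝ) + 1)) / (2 * (2 * (n:ℝ) - ((k:ℝ) + 1)))) * sigmaN n)) ^
              ((k:ℝ) / (n:ℝ))) :=
  fun _ hx₀ => mstar_upper_bound_general hk1 (by omega) hσ0 hω hx₀
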